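/- For any simple root system Π of ŝl(m|n) with m, n ≥ 2 and m ≠ n, the minimalistic affine super Yangian Y_ℏ(ŝl(m|n,Π)) is isomorphic, as an associative superalgebra, to the Drinfeld affine super Yangian Y^D_ℏ(ŝl(m|n,Π)), via the map sending the generators x^±_{α_i,r}, h_{α_i,r} with r ∈ {0,1} to the generators of the same name. -/

import Mathlib

/-!
Common framework for formalizing statements about affine super Yangians
`Y_ℏ(ŝl(m|n,Π))` attached to a simple root system `Π` of the affine
Kac–Moody superalgebra `ŝl(m|n)` of type `A^{(1)}(m−1|n−1)`.
-/

noncomputable section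

namespace ASY

open scoped TensorProduct

/-- The ground ring `ℂ[ℏ]`. -/
abbrev R : Type := Polynomial ℂ

/-- The formal deformation parameter `ℏ`. -/
def hbar : R := Polynomial.X

/-- `1/2` as an element of `ℂ[ℏ]`. -/
def half : R := Polynomial.C (1/2 : ℂ)

/-- The sign `(−1)^{p(a)p(b)}` attached to parities `pa`, `pb`. -/
def sg (pa pb : Bool) : R := if pa && pb then -1 else 1

section SuperOps

variable {Y : Type*} [Ring Y] [Algebra R Y]

/-- The supercommutator `[a,b] = ab − (−1)^{p(a)p(b)} ba` of homogeneous elements of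
parities `pa` and `pb`. -/
def sbr (pa pb : Bool) (x y : Y) : Y := x * y - sg pa pb • (y * x)

/-- The super anticommutator `{a,b} = ab + (−1)^{p(a)p(b)} ba`. -/
def sac (pa pb : Bool) (x y : Y) : Y := x * y + sg pa pb • (y * x)

/-- Iterated super-adjoint action `(ad x)^k y` for `x` of parity `pa` and `y` of parity `pb`. -/
def adN (pa pb : Bool) (x : Y) : ℕ → Y → Y
  | 0, y => y
  | k + 1, y => sbr pa (xor pb (pa && decide (k % 2 = 1))) x (adN pa pb x k y)

/-- Iterated super-bracket `[x₁,[x₂,…,[x_k, y]…]]`, all `xᵢ` of parity `pa`, `y` of parity `pb`. -/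
def adSeq (pa pb : Bool) : List Y → Y → Y
  | [], y => y
  | x :: l, y => sbr pa (xor pb (pa && decide (l.length % 2 = 1))) x (adSeq pa pb l y)

end SuperOps

/-- A simple root system `Π` of the affine Kac–Moody superalgebra `ŝl(m|n)`
(type `A^{(1)}(m−1|n−1)`): a cyclic arrangement of the `m + n` weights
`ε₁,…,ε_m, δ₁,…,δ_n`, recorded by the type of the weight at each position
(`false` = an `ε`-weight of norm `+1`, `true` = a `δ`-weight of norm `−1`);
the simple roots are `α_i = e_i − e_{i+1}` (indices mod `m+n`). -/
structure SimpleRootSystem (m n : ℕ) : Type where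
  /-- the type of the weight at each position -/
  τ : Fin (m + n) → Bool
  /-- there are exactly `n` weights of `δ`-type -/
  card_delta : (Finset.univ.filter fun k => τ k = true).card = n

namespace SimpleRootSystem

variable {m n : ℕ}

/-- The norm `(e_k, e_k) = ±1` of the `k`-th weight. -/
def w (P : SimpleRootSystem m n) (k : Fin (m + n)) : ℤ := if P.τ k then -1 else 1

variable [NeZero (m + n)]

/-- The coefficient of `e_k` in the simple root `α_i = e_i − e_{i+1}`. -/
def coeffα (i k : Fin (m + n)) : ℤ := (if k = i then 1 else 0) - (if k = i + 1 then 1 else 0)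

/-- The (symmetric) Cartan matrix `a_{ij} = (α_i, α_j)` of `Π`. -/
def a (P : SimpleRootSystem m n) (i j : Fin (m + n)) : ℤ :=
  ∑ k, P.w k * coeffα i k * coeffα j k

/-- The parity of the simple root `α_i` (`true` iff `α_i` is odd, iff `a_{ii} = 0`). -/
def par (P : SimpleRootSystem m n) (i : Fin (m + n)) : Bool := P.τ i != P.τ (i + 1)

/-- The reflection `s_{α_i}` on simple root systems: on the weight arrangement it
swaps the weights at positions `i` and `i+1`.  For `α_i` even it preserves `Π`;
for `α_i` odd it is the odd reflection `Π ↦ Π₁`. -/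
def reflect (P : SimpleRootSystem m n) (i : Fin (m + n)) : SimpleRootSystem m n where
  τ := P.τ ∘ Equiv.swap i (i + 1)
  card_delta := by
    have h1 : (Finset.univ.filter fun k => (P.τ ∘ Equiv.swap i (i + 1)) k = true).card
        = (Finset.univ.filter fun k => P.τ k = true).card :=
      Finset.card_equiv (Equiv.swap i (i + 1)) (fun k => by simp)
    rw [h1, P.card_delta]

/-- Applying a word of simple reflections to a simple root system. -/
def applyWord (P : SimpleRootSystem m n) : List (Fin (m + n)) → SimpleRootSystem m n
  | [] => P
  | c :: l => applyWord (P.reflect c) l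

/-- The word consists of even reflections at every stage (i.e. it represents an
element of the Weyl group, generated by even reflections). -/
def IsEvenWord (P : SimpleRootSystem m n) : List (Fin (m + n)) → Prop
  | [] => True
  | c :: l => P.par c = false ∧ IsEvenWord (P.reflect c) l

end SimpleRootSystem

end ASY

namespace ASY

/-- Generators of the minimalistic affine super Yangian: `x^±_{α_i,r}`, `h_{α_i,r}`
with `i ∈ I` and `r ∈ {0,1}`. -/
inductive MGen (N : ℕ) : Type
  | xp (i : Fin N) (r : Fin 2)
  | xm (i : Fin N) (r : Fin 2)
  | h (i : Fin N) (r : Fin 2)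

/-- The free algebra on the minimalistic generators. -/
abbrev MFree (m n : ℕ) : Type := FreeAlgebra R (MGen (m + n))

section MinDefs

variable {m n : ℕ}

/-- `x^+_{α_i,r}` in the free algebra. -/
def MXp (i : Fin (m + n)) (r : Fin 2) : MFree m n := FreeAlgebra.ι R (MGen.xp i r)

/-- `x^−_{α_i,r}` in the free algebra. -/
def MXm (i : Fin (m + n)) (r : Fin 2) : MFree m n := FreeAlgebra.ι R (MGen.xm i r)

/-- `h_{α_i,r}` in the free algebra. -/
def MH (i : Fin (m + n)) (r : Fin 2) : MFree m n := FreeAlgebra.ι R (MGen.h i r)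

/-- `h̃_{α_i,1} = h_{α_i,1} − (ℏ/2) h_{α_i,0}²` in the free algebra. -/
def MHt (i : Fin (m + n)) : MFree m n := MH i 1 - (half * hbar) • (MH i 0 * MH i 0)

variable [NeZero (m + n)]

/-- The defining relations of the minimalistic affine super Yangian `Y_ℏ(ŝl(m|n,Π))`. -/
inductive MRel (P : SimpleRootSystem m n) : MFree m n → MFree m n → Prop
  /-- `[h_{α_i,r}, h_{α_j,s}] = 0` -/
  | hh (i j : Fin (m + n)) (r s : Fin 2) :
      MRel P (sbr false false (MH i r) (MH j s)) 0
  /-- `[x^+_{α_i,0}, x^−_{α_j,0}] = δ_{ij} h_{α_i,0}` -/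
  | pm00 (i j : Fin (m + n)) :
      MRel P (sbr (P.par i) (P.par j) (MXp i 0) (MXm j 0)) (if i = j then MH i 0 else 0)
  /-- `[x^+_{α_i,1}, x^−_{α_j,0}] = δ_{ij} h_{α_i,1}` -/
  | pm10 (i j : Fin (m + n)) :
      MRel P (sbr (P.par i) (P.par j) (MXp i 1) (MXm j 0)) (if i = j then MH i 1 else 0)
  /-- `[x^+_{α_i,0}, x^−_{α_j,1}] = δ_{ij} h_{α_i,1}` -/
  | pm01 (i j : Fin (m + n)) :
      MRel P (sbr (P.par i) (P.par j) (MXp i 0) (MXm j 1)) (if i = j then MH i 1 else 0)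
  /-- `[h_{α_i,0}, x^+_{α_j,r}] = a_{ij} x^+_{α_j,r}` -/
  | hxp (i j : Fin (m + n)) (r : Fin 2) :
      MRel P (sbr false (P.par j) (MH i 0) (MXp j r)) (((P.a i j : ℤ) : R) • MXp j r)
  /-- `[h_{α_i,0}, x^−_{α_j,r}] = −a_{ij} x^−_{α_j,r}` -/
  | hxm (i j : Fin (m + n)) (r : Fin 2) :
      MRel P (sbr false (P.par j) (MH i 0) (MXm j r)) ((-(P.a i j : ℤ) : R) • MXm j r)
  /-- `[x^+_{α_i,1},x^+_{α_j,0}] − [x^+_{α_i,0},x^+_{α_j,1}] = (ℏ a_{ij}/2){x^+_{α_i,0},x^+_{α_j,0}}` -/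
  | mixp (i j : Fin (m + n)) :
      MRel P (sbr (P.par i) (P.par j) (MXp i 1) (MXp j 0)
          - sbr (P.par i) (P.par j) (MXp i 0) (MXp j 1))
        ((half * hbar * ((P.a i j : ℤ) : R)) • sac (P.par i) (P.par j) (MXp i 0) (MXp j 0))
  /-- `[x^−_{α_i,1},x^−_{α_j,0}] − [x^−_{α_i,0},x^−_{α_j,1}] = −(ℏ a_{ij}/2){x^−_{α_i,0},x^−_{α_j,0}}` -/
  | mixm (i j : Fin (m + n)) :
      MRel P (sbr (P.par i) (P.par j) (MXm i 1) (MXm j 0)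
          - sbr (P.par i) (P.par j) (MXm i 0) (MXm j 1))
        ((-(half * hbar * ((P.a i j : ℤ) : R))) • sac (P.par i) (P.par j) (MXm i 0) (MXm j 0))
  /-- `[h̃_{α_i,1}, x^+_{α_j,0}] = a_{ij} x^+_{α_j,1}` -/
  | htxp (i j : Fin (m + n)) :
      MRel P (sbr false (P.par j) (MHt i) (MXp j 0)) (((P.a i j : ℤ) : R) • MXp j 1)
  /-- `[h̃_{α_i,1}, x^−_{α_j,0}] = −a_{ij} x^−_{α_j,1}` -/
  | htxm (i j : Fin (m + n)) :
      MRel P (sbr false (P.par j) (MHt i) (MXm j 0)) ((-(P.a i j : ℤ) : R) • MXm j 1)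
  /-- Serre relation `(ad x^+_{α_i,0})^{1+|a_{ij}|}(x^+_{α_j,0}) = 0`, `i ≠ j` -/
  | serrep (i j : Fin (m + n)) (hij : i ≠ j) :
      MRel P (adN (P.par i) (P.par j) (MXp i 0) (1 + (P.a i j).natAbs) (MXp j 0)) 0
  /-- Serre relation `(ad x^−_{α_i,0})^{1+|a_{ij}|}(x^−_{α_j,0}) = 0`, `i ≠ j` -/
  | serrem (i j : Fin (m + n)) (hij : i ≠ j) :
      MRel P (adN (P.par i) (P.par j) (MXm i 0) (1 + (P.a i j).natAbs) (MXm j 0)) 0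
  /-- `[x^+_{α_t,0}, x^+_{α_t,0}] = 0` for `α_t` odd -/
  | oddp (t : Fin (m + n)) (ht : P.par t = true) :
      MRel P (sbr true true (MXp t 0) (MXp t 0)) 0
  /-- `[x^−_{α_t,0}, x^−_{α_t,0}] = 0` for `α_t` odd -/
  | oddm (t : Fin (m + n)) (ht : P.par t = true) :
      MRel P (sbr true true (MXm t 0) (MXm t 0)) 0
  /-- `[[x^+_{α_{t−1},0},x^+_{α_t,0}],[x^+_{α_t,0},x^+_{α_{t+1},0}]] = 0` for `α_t` odd -/
  | oddSp (t : Fin (m + n)) (ht : P.par t = true) :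
      MRel P (sbr (xor (P.par (t - 1)) true) (xor true (P.par (t + 1)))
        (sbr (P.par (t - 1)) true (MXp (t - 1) 0) (MXp t 0))
        (sbr true (P.par (t + 1)) (MXp t 0) (MXp (t + 1) 0))) 0
  /-- `[[x^−_{α_{t−1},0},x^−_{α_t,0}],[x^−_{α_t,0},x^−_{α_{t+1},0}]] = 0` for `α_t` odd -/
  | oddSm (t : Fin (m + n)) (ht : P.par t = true) :
      MRel P (sbr (xor (P.par (t - 1)) true) (xor true (P.par (t + 1)))
        (sbr (P.par (t - 1)) true (MXm (t - 1) 0) (MXm t 0))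
        (sbr true (P.par (t + 1)) (MXm t 0) (MXm (t + 1) 0))) 0

/-- The minimalistic affine super Yangian `Y_ℏ(ŝl(m|n,Π))`, presented on the
generators `x^±_{α_i,r}`, `h_{α_i,r}` (`r ∈ {0,1}`) by the minimalistic relations. -/
abbrev Ymin (P : SimpleRootSystem m n) : Type := RingQuot (MRel P)

/-- The canonical projection from the free algebra onto `Y_ℏ(ŝl(m|n,Π))`. -/
def mkY (P : SimpleRootSystem m n) : MFree m n →ₐ[R] Ymin P := RingQuot.mkAlgHom R (MRel P)

/-- The generator `x^+_{α_i,r}` of `Y_ℏ(ŝl(m|n,Π))`. -/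
def xgp (P : SimpleRootSystem m n) (i : Fin (m + n)) (r : Fin 2) : Ymin P := mkY P (MXp i r)

/-- The generator `x^−_{α_i,r}` of `Y_ℏ(ŝl(m|n,Π))`. -/
def xgm (P : SimpleRootSystem m n) (i : Fin (m + n)) (r : Fin 2) : Ymin P := mkY P (MXm i r)

/-- The generator `h_{α_i,r}` of `Y_ℏ(ŝl(m|n,Π))`. -/
def hg (P : SimpleRootSystem m n) (i : Fin (m + n)) (r : Fin 2) : Ymin P := mkY P (MH i r)

/-- The element `h̃_{α_i,1} = h_{α_i,1} − (ℏ/2)h_{α_i,0}²` of `Y_ℏ(ŝl(m|n,Π))`. -/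
def htilY (P : SimpleRootSystem m n) (i : Fin (m + n)) : Ymin P := mkY P (MHt i)

/-- The scalar `a_{i+1,i}⁻¹ ∈ ℂ ⊆ ℂ[ℏ]`. -/
def acoef (P : SimpleRootSystem m n) (i : Fin (m + n)) : R :=
  Polynomial.C (((P.a (i + 1) i : ℤ) : ℂ)⁻¹)

/-- The recursively defined higher generators
`x^+_{α_i,r+1} := a_{i+1,i}⁻¹ [h̃_{α_{i+1},1}, x^+_{α_i,r}]` (`r ≥ 1`). -/
def xpn (P : SimpleRootSystem m n) (i : Fin (m + n)) : ℕ → Ymin P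
  | 0 => xgp P i 0
  | 1 => xgp P i 1
  | r + 2 => acoef P i • sbr false (P.par i) (htilY P (i + 1)) (xpn P i (r + 1))

/-- The recursively defined higher generators
`x^−_{α_i,r+1} := −a_{i+1,i}⁻¹ [h̃_{α_{i+1},1}, x^−_{α_i,r}]` (`r ≥ 1`). -/
def xmn (P : SimpleRootSystem m n) (i : Fin (m + n)) : ℕ → Ymin P
  | 0 => xgm P i 0
  | 1 => xgm P i 1
  | r + 2 => (-acoef P i) • sbr false (P.par i) (htilY P (i + 1)) (xmn P i (r + 1))

/-- The recursively defined higher Cartan generators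
`h_{α_i,r+1} := [x^+_{α_i,r+1}, x^−_{α_i,0}]` (`r ≥ 1`). -/
def hcn (P : SimpleRootSystem m n) (i : Fin (m + n)) : ℕ → Ymin P
  | 0 => hg P i 0
  | 1 => hg P i 1
  | r + 2 => sbr (P.par i) (P.par i) (xpn P i (r + 2)) (xmn P i 0)

end MinDefs

end ASY

namespace ASY

/-- Generators of the Drinfeld affine super Yangian: `x^±_{α_i,r}`, `h_{α_i,r}` with `r ∈ ℤ_{≥0}`. -/
inductive DGen (N : ℕ) : Type
  | xp (i : Fin N) (r : ℕ)
  | xm (i : Fin N) (r : ℕ)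
  | h (i : Fin N) (r : ℕ)

/-- The free algebra on the Drinfeld generators. -/
abbrev DFree (m n : ℕ) : Type := FreeAlgebra R (DGen (m + n))

section DrinDefs

variable {m n : ℕ}

/-- `x^+_{α_i,r}` in the free algebra. -/
def DXp (i : Fin (m + n)) (r : ℕ) : DFree m n := FreeAlgebra.ι R (DGen.xp i r)

/-- `x^−_{α_i,r}` in the free algebra. -/
def DXm (i : Fin (m + n)) (r : ℕ) : DFree m n := FreeAlgebra.ι R (DGen.xm i r)

/-- `h_{α_i,r}` in the free algebra. -/
def DH (i : Fin (m + n)) (r : ℕ) : DFree m n := FreeAlgebra.ι R (DGen.h i r)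

variable [NeZero (m + n)]

/-- The defining relations of the Drinfeld affine super Yangian `Y^D_ℏ(ŝl(m|n,Π))`. -/
inductive DRel (P : SimpleRootSystem m n) : DFree m n → DFree m n → Prop
  /-- `[h_{α_i,r}, h_{α_j,s}] = 0` -/
  | hh (i j : Fin (m + n)) (r s : ℕ) :
      DRel P (sbr false false (DH i r) (DH j s)) 0
  /-- `[h_{α_i,0}, x^+_{α_j,s}] = a_{ij} x^+_{α_j,s}` -/
  | hxp (i j : Fin (m + n)) (s : ℕ) :
      DRel P (sbr false (P.par j) (DH i 0) (DXp j s)) (((P.a i j : ℤ) : R) • DXp j s)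
  /-- `[h_{α_i,0}, x^−_{α_j,s}] = −a_{ij} x^−_{α_j,s}` -/
  | hxm (i j : Fin (m + n)) (s : ℕ) :
      DRel P (sbr false (P.par j) (DH i 0) (DXm j s)) ((-(P.a i j : ℤ) : R) • DXm j s)
  /-- `[x^+_{α_i,r}, x^−_{α_j,s}] = δ_{ij} h_{α_i,r+s}` -/
  | pm (i j : Fin (m + n)) (r s : ℕ) :
      DRel P (sbr (P.par i) (P.par j) (DXp i r) (DXm j s)) (if i = j then DH i (r + s) else 0)
  /-- `[h_{α_i,r+1},x^+_{α_j,s}] − [h_{α_i,r},x^+_{α_j,s+1}] = (ℏ a_{ij}/2){h_{α_i,r},x^+_{α_j,s}}` -/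
  | hmixp (i j : Fin (m + n)) (r s : ℕ) :
      DRel P (sbr false (P.par j) (DH i (r + 1)) (DXp j s)
          - sbr false (P.par j) (DH i r) (DXp j (s + 1)))
        ((half * hbar * ((P.a i j : ℤ) : R)) • sac false (P.par j) (DH i r) (DXp j s))
  /-- `[h_{α_i,r+1},x^−_{α_j,s}] − [h_{α_i,r},x^−_{α_j,s+1}] = −(ℏ a_{ij}/2){h_{α_i,r},x^−_{α_j,s}}` -/
  | hmixm (i j : Fin (m + n)) (r s : ℕ) :
      DRel P (sbr false (P.par j) (DH i (r + 1)) (DXm j s)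
          - sbr false (P.par j) (DH i r) (DXm j (s + 1)))
        ((-(half * hbar * ((P.a i j : ℤ) : R))) • sac false (P.par j) (DH i r) (DXm j s))
  /-- `[x^+_{α_i,r+1},x^+_{α_j,s}] − [x^+_{α_i,r},x^+_{α_j,s+1}] = (ℏ a_{ij}/2){x^+_{α_i,r},x^+_{α_j,s}}` -/
  | xmixp (i j : Fin (m + n)) (r s : ℕ) :
      DRel P (sbr (P.par i) (P.par j) (DXp i (r + 1)) (DXp j s)
          - sbr (P.par i) (P.par j) (DXp i r) (DXp j (s + 1)))
        ((half * hbar * ((P.a i j : ℤ) : R)) • sac (P.par i) (P.par j) (DXp i r) (DXp j s))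
  /-- `[x^−_{α_i,r+1},x^−_{α_j,s}] − [x^−_{α_i,r},x^−_{α_j,s+1}] = −(ℏ a_{ij}/2){x^−_{α_i,r},x^−_{α_j,s}}` -/
  | xmixm (i j : Fin (m + n)) (r s : ℕ) :
      DRel P (sbr (P.par i) (P.par j) (DXm i (r + 1)) (DXm j s)
          - sbr (P.par i) (P.par j) (DXm i r) (DXm j (s + 1)))
        ((-(half * hbar * ((P.a i j : ℤ) : R))) • sac (P.par i) (P.par j) (DXm i r) (DXm j s))
  /-- Serre relation `Σ_{σ ∈ S_k} [x^+_{α_i,r_{σ(1)}},[…,[x^+_{α_i,r_{σ(k)}},x^+_{α_j,s}]…]] = 0`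
  for `i ≠ j` and `k = 1 + |a_{ij}|` -/
  | serrep (i j : Fin (m + n)) (hij : i ≠ j)
      (rr : Fin (1 + (P.a i j).natAbs) → ℕ) (s : ℕ) :
      DRel P (∑ σ : Equiv.Perm (Fin (1 + (P.a i j).natAbs)),
        adSeq (P.par i) (P.par j) (List.ofFn fun t => DXp i (rr (σ t))) (DXp j s)) 0
  /-- Serre relation for the `x^−` generators -/
  | serrem (i j : Fin (m + n)) (hij : i ≠ j)
      (rr : Fin (1 + (P.a i j).natAbs) → ℕ) (s : ℕ) :
      DRel P (∑ σ : Equiv.Perm (Fin (1 + (P.a i j).natAbs)),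
        adSeq (P.par i) (P.par j) (List.ofFn fun t => DXm i (rr (σ t))) (DXm j s)) 0
  /-- `[x^+_{α_t,r}, x^+_{α_t,s}] = 0` for `α_t` odd -/
  | oddp (t : Fin (m + n)) (ht : P.par t = true) (r s : ℕ) :
      DRel P (sbr true true (DXp t r) (DXp t s)) 0
  /-- `[x^−_{α_t,r}, x^−_{α_t,s}] = 0` for `α_t` odd -/
  | oddm (t : Fin (m + n)) (ht : P.par t = true) (r s : ℕ) :
      DRel P (sbr true true (DXm t r) (DXm t s)) 0
  /-- `[[x^+_{α_{t−1},r},x^+_{α_t,0}],[x^+_{α_t,0},x^+_{α_{t+1},s}]] = 0` for `α_t` odd -/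
  | oddSp (t : Fin (m + n)) (ht : P.par t = true) (r s : ℕ) :
      DRel P (sbr (xor (P.par (t - 1)) true) (xor true (P.par (t + 1)))
        (sbr (P.par (t - 1)) true (DXp (t - 1) r) (DXp t 0))
        (sbr true (P.par (t + 1)) (DXp t 0) (DXp (t + 1) s))) 0
  /-- `[[x^−_{α_{t−1},r},x^−_{α_t,0}],[x^−_{α_t,0},x^−_{α_{t+1},s}]] = 0` for `α_t` odd -/
  | oddSm (t : Fin (m + n)) (ht : P.par t = true) (r s : ℕ) :
      DRel P (sbr (xor (P.par (t - 1)) true) (xor true (P.par (t + 1)))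
        (sbr (P.par (t - 1)) true (DXm (t - 1) r) (DXm t 0))
        (sbr true (P.par (t + 1)) (DXm t 0) (DXm (t + 1) s))) 0

/-- The Drinfeld affine super Yangian `Y^D_ℏ(ŝl(m|n,Π))`. -/
abbrev YD (P : SimpleRootSystem m n) : Type := RingQuot (DRel P)

/-- The canonical projection onto `Y^D_ℏ(ŝl(m|n,Π))`. -/
def mkD (P : SimpleRootSystem m n) : DFree m n →ₐ[R] YD P := RingQuot.mkAlgHom R (DRel P)

/-- The generator `x^+_{α_i,r}` of `Y^D_ℏ(ŝl(m|n,Π))`. -/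
def xdp (P : SimpleRootSystem m n) (i : Fin (m + n)) (r : ℕ) : YD P := mkD P (DXp i r)

/-- The generator `x^−_{α_i,r}` of `Y^D_ℏ(ŝl(m|n,Π))`. -/
def xdm (P : SimpleRootSystem m n) (i : Fin (m + n)) (r : ℕ) : YD P := mkD P (DXm i r)

/-- The generator `h_{α_i,r}` of `Y^D_ℏ(ŝl(m|n,Π))`. -/
def hd (P : SimpleRootSystem m n) (i : Fin (m + n)) (r : ℕ) : YD P := mkD P (DH i r)

/-- An algebra isomorphism `Y_ℏ(ŝl(m|n,Π)) ≃ Y^D_ℏ(ŝl(m|n,Π))` matches the generators if it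
sends each generator `x^±_{α_i,r}`, `h_{α_i,r}` (`r ∈ {0,1}`) of the minimalistic presentation
to the Drinfeld generator of the same name. -/
def MatchesGenerators (P : SimpleRootSystem m n) (E : Ymin P ≃ₐ[R] YD P) : Prop :=
  ∀ (i : Fin (m + n)) (r : Fin 2),
    E (xgp P i r) = xdp P i r.val ∧ E (xgm P i r) = xdm P i r.val ∧ E (hg P i r) = hd P i r.val

end DrinDefs

end ASY

/-!
The proof compares the two presentations by building homomorphisms in both directions that
match the generators. Sending the minimalistic generators to the Drinfeld generators of the same
name is easy: the minimalistic relations are special cases or direct consequences of the Drinfeld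
relations (`drel_mrel`). The substance is the other direction: the elements `xpn`, `xmn`, `hcn` of
the minimalistic Yangian, defined by recursion, satisfy all Drinfeld relations (`MinSys.rel`).

* Commutation with `h̃_{j,1}` raises the loop index of `x^±_i` by one, up to the factor `±a_{ji}`.
  Since there are at least five nodes on the cycle, for `i ≠ j` there is a node adjacent to `i`
  that shifts `x_i` alone. Hence `[x^+_{i,r}, x^-_{j,s}] = 0` and the mixed relations between
  `x^±_i` and `x^±_j` propagate from loop index zero to all loop indices. The action of the
  current `h_j` on `x^±_i` with `i ≠ j` follows from these.

* The relation `[x^+_{i,r}, x^-_{i,s}] = h_{i,r+s}` is proved by induction on the level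
  `p = r + s` (`MinSys.pm_self`). The defect
  `D_i = [x^+_{i,r+1}, x^-_{i,s}] - [x^+_{i,r}, x^-_{i,s+1}]` with `r + s = p` does not depend on
  `(r, s)`. Computing `[h_{i,p}, h_{j,1}]` for adjacent nodes `i`, `j` in two ways gives
  `D_i = -p D_j`, hence `D_i = p² D_i`, and so `D_i = 0`; for `p = 1` the relation
  `[h_{i,1}, h_{j,1}] = 0` gives the claim directly.

* A correction of `h_{k,2}` shifts loop indices by two. Together with the shift by one this gives
  the operators of multiplication by the power sums `p₁`, `p₂` in two variables, which generate
  all symmetric polynomials; so the relations between `x^±_{i,r}` and `x^±_{i,s}` and the Serre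
  relations propagate from loop index zero to all loop indices. The action of `h_i` on `x^±_i` and
  the commutativity of all `h_{i,r}` follow.

The two homomorphisms are mutually inverse because they are so on generators: in the Drinfeld
Yangian the recursion for `xpn`, `xmn`, `hcn` reproduces the Drinfeld generators
(`MinRep.map_currents`).
-/

namespace ASY

/-! ### Super brackets and inner derivations -/

section Generic

variable {A : Type*} [Ring A] [Algebra R A]

/-- The inner derivation `x ↦ t x − x t` attached to an (even) element `t`. -/
def adL (t : A) : A →ₗ[R] A := LinearMap.mulLeft R t - LinearMap.mulRight R t

lemma adL_apply (t x : A) : adL t x = t * x - x * t := by simp [adL]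

lemma sg_false_left (q : Bool) : sg false q = 1 := by simp [sg]

lemma sg_comm (p q : Bool) : sg p q = sg q p := by simp [sg, Bool.and_comm]

lemma sg_mul_self (p q : Bool) : sg p q * sg p q = 1 := by
  unfold sg; split_ifs <;> simp

lemma sbr_false (p : Bool) (t x : A) : sbr false p t x = adL t x := by
  simp [sbr, sg_false_left, adL_apply]

lemma sac_false (p : Bool) (t x : A) : sac false p t x = t * x + x * t := by
  simp [sac, sg_false_left]

lemma adL_mul (t x y : A) : adL t (x * y) = adL t x * y + x * adL t y := by
  simp only [adL_apply]; noncomm_ring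

lemma adL_sbr (t : A) (p q : Bool) (x y : A) :
    adL t (sbr p q x y) = sbr p q (adL t x) y + sbr p q x (adL t y) := by
  simp only [sbr, map_sub, map_smul, adL_mul, smul_add]; abel

lemma adL_sac (t : A) (p q : Bool) (x y : A) :
    adL t (sac p q x y) = sac p q (adL t x) y + sac p q x (adL t y) := by
  simp only [sac, map_add, map_smul, adL_mul, smul_add]; abel

section bilinear
variable (p q : Bool) (x x' y y' : A) (c : R)

lemma sbr_add_left : sbr p q (x + x') y = sbr p q x y + sbr p q x' y := by
  simp only [sbr, add_mul, mul_add, smul_add]; abel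
lemma sbr_add_right : sbr p q x (y + y') = sbr p q x y + sbr p q x y' := by
  simp only [sbr, add_mul, mul_add, smul_add]; abel
lemma sbr_smul_left : sbr p q (c • x) y = c • sbr p q x y := by
  simp only [sbr, smul_mul_assoc, mul_smul_comm, smul_sub]; rw [smul_comm]
lemma sbr_smul_right : sbr p q x (c • y) = c • sbr p q x y := by
  simp only [sbr, smul_mul_assoc, mul_smul_comm, smul_sub]; rw [smul_comm]
lemma sac_add_left : sac p q (x + x') y = sac p q x y + sac p q x' y := by
  simp only [sac, add_mul, mul_add, smul_add]; abel
lemma sac_add_right : sac p q x (y + y') = sac p q x y + sac p q x y' := by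
  simp only [sac, add_mul, mul_add, smul_add]; abel
lemma sac_smul_left : sac p q (c • x) y = c • sac p q x y := by
  simp only [sac, smul_mul_assoc, mul_smul_comm, smul_add]; rw [smul_comm]
lemma sac_smul_right : sac p q x (c • y) = c • sac p q x y := by
  simp only [sac, smul_mul_assoc, mul_smul_comm, smul_add]; rw [smul_comm]
lemma sbr_zero_left : sbr p q 0 y = 0 := by simp [sbr]
lemma sbr_zero_right : sbr p q x 0 = 0 := by simp [sbr]
lemma sac_zero_left : sac p q 0 y = 0 := by simp [sac]
lemma sac_zero_right : sac p q x 0 = 0 := by simp [sac]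

end bilinear

/-! ### Propagating relations along the loop index -/

lemma shift_one {Z : ℕ → A} (D : A →ₗ[R] A) {d : R} (hd : IsUnit d)
    (hZ : ∀ r, D (Z r) = d • Z (r + 1)) (h0 : Z 0 = 0) : ∀ r, Z r = 0 := by
  intro r
  induction r with
  | zero => exact h0
  | succ r ih =>
    have := hZ r
    rw [ih, map_zero] at this
    exact (hd.smul_eq_zero).1 this.symm

lemma shift_two {Z : ℕ → ℕ → A} (D D' : A →ₗ[R] A) {d d' : R} (hd : IsUnit d) (hd' : IsUnit d')
    (hZ : ∀ r s, D (Z r s) = d • Z (r + 1) s) (hZ' : ∀ r s, D' (Z r s) = d' • Z r (s + 1))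
    (h0 : Z 0 0 = 0) : ∀ r s, Z r s = 0 := by
  intro r s
  exact shift_one (Z := fun s => Z r s) D' hd' (hZ' r)
    (shift_one (Z := fun r => Z r 0) D hd (fun r => hZ r 0) h0 r) s

lemma isUnit_natCast_R {k : ℕ} (hk : k ≠ 0) : IsUnit ((k : ℕ) : R) := by
  have : ((k : ℕ) : R) = Polynomial.C (k : ℂ) := by simp
  rw [this, Polynomial.isUnit_C]
  exact (Nat.cast_ne_zero.2 hk).isUnit

lemma eq_zero_of_two {x : A} (h : x + x = 0) : x = 0 := by
  have h2 : ((2 : ℕ) : R) • x = 0 := by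
    rw [← h]; push_cast; rw [two_smul]
  exact ((isUnit_natCast_R two_ne_zero).smul_eq_zero).1 h2

/-- A symmetric family `Z r s` on which one derivation acts by the power sum `p₁` and another by
the power sum `p₂` (up to a scalar) vanishes as soon as `Z 0 0` does, because `p₁, p₂` generate
all symmetric polynomials in two variables. -/
lemma shift_sym {Z : ℕ → ℕ → A} (D D' : A →ₗ[R] A) {d d' κ : R} (hd : IsUnit d) (hd' : IsUnit d')
    (hZ : ∀ r s, D (Z r s) = d • (Z (r + 1) s + Z r (s + 1)))
    (hZ' : ∀ r s, D' (Z r s) = d' • (Z (r + 2) s + Z r (s + 2)) + κ • Z r s)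
    (hs : Z 1 0 = Z 0 1) (h0 : Z 0 0 = 0) : ∀ r s, Z r s = 0 := by
  have key : ∀ n, ∀ r s, r + s ≤ n → Z r s = 0 := by
    intro n
    induction n with
    | zero =>
      intro r s h
      obtain ⟨rfl, rfl⟩ : r = 0 ∧ s = 0 := by omega
      exact h0
    | succ n ih =>
      have e1 : ∀ r s, r + s = n → Z (r + 1) s + Z r (s + 1) = 0 := by
        intro r s h
        have := hZ r s
        rw [ih r s h.le, map_zero] at this
        exact (hd.smul_eq_zero).1 this.symm
      have e2 : ∀ r s, r + s + 1 = n → Z (r + 2) s + Z r (s + 2) = 0 := by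
        intro r s h
        have := hZ' r s
        rw [ih r s (by omega), map_zero, smul_zero, add_zero] at this
        exact (hd'.smul_eq_zero).1 this.symm
      have e0 : Z 0 (n + 1) = 0 := by
        rcases n with _ | n
        · apply eq_zero_of_two
          have := e1 0 0 rfl
          simp only [zero_add] at this
          rw [hs] at this
          simpa using this
        · have a1 := e1 1 n (by omega)
          have a2 := e1 0 (n + 1) (by omega)
          have a3 := e2 0 n (by omega)
          simp only [zero_add, one_add_one_eq_two] at a1 a2 a3
          apply eq_zero_of_two
          rw [show n + 1 + 1 = n + 2 from rfl] at *
          calc Z 0 (n + 2) + Z 0 (n + 2)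
              = (Z 1 (n + 1) + Z 0 (n + 2)) - (Z 2 n + Z 1 (n + 1))
                + (Z 2 n + Z 0 (n + 2)) := by abel
            _ = 0 := by rw [a1, a2, a3]; simp
      have e3 : ∀ r s, r + s = n + 1 → Z r s = 0 := by
        intro r
        induction r with
        | zero => intro s h; obtain rfl : s = n + 1 := by omega
                  exact e0
        | succ r ihr =>
          intro s h
          have := e1 r s (by omega)
          rwa [ihr (s + 1) (by omega), add_zero] at this
      intro r s h
      rcases Nat.lt_or_ge (r + s) (n + 1) with h' | h'
      · exact ih r s (by omega)
      · exact e3 r s (by omega)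
  exact fun r s => key _ r s le_rfl

end Generic

end ASY
namespace ASY

section Currents

variable {A : Type*} [Ring A] [Algebra R A]

/-! ### Cartan currents acting on root currents -/

lemma two_half : half + half = (1 : R) := by
  rw [half, ← Polynomial.C_add]; norm_num

/-- The (truncated) action of a Cartan current `h` on a root current `x` of weight `a`:
`[h₀, x_s] = a x_s` and `[h_{r+1}, x_s] − [h_r, x_{s+1}] = (ℏa/2){h_r, x_s}` for `r < L`. -/
structure Act (L : ℕ) (a : R) (h x : ℕ → A) : Prop where
  zero : ∀ s, adL (h 0) (x s) = a • x s
  succ : ∀ r s, r < L → adL (h (r + 1)) (x s) - adL (h r) (x (s + 1))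
    = (half * hbar * a) • (h r * x s + x s * h r)

/-- Coefficients of `(v + c)^k v^s` paired with the current `x`, where `v^s ↦ x s`. -/
def tw (c : R) (x : ℕ → A) : ℕ → ℕ → A
  | 0, s => x s
  | k + 1, s => tw c x k (s + 1) + c • tw c x k s

/-- Coefficients of the series `1 + ℏ ∑ h_r u^{-r-1}`. -/
def gg (h : ℕ → A) : ℕ → A
  | 0 => 1
  | r + 1 => hbar • h r

lemma act_left {L : ℕ} {a : R} {h x : ℕ → A} (H : Act L a h x) :
    ∀ p ≤ L, ∀ s, adL (h p) (x s)
      = a • ∑ k ∈ Finset.range (p + 1), tw (half * hbar * a) x k s * gg h (p - k) := by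
  intro p
  induction p with
  | zero => intro _ s; simp [H.zero, tw, gg]
  | succ p ih =>
    intro hp s
    have e := H.succ p s (by omega)
    have i1 := ih (by omega) (s + 1)
    have i2 := ih (by omega) s
    have e' : adL (h (p + 1)) (x s) = adL (h p) (x (s + 1))
        + (half * hbar * a) • adL (h p) (x s) + (hbar * a) • (x s * h p) := by
      rw [sub_eq_iff_eq_add.1 e, adL_apply (h p) (x s), ← one_mul (hbar * a), ← two_half]
      module
    rw [e', i1, i2, Finset.sum_range_succ' _ (p + 1)]
    have hk : ∀ k, p + 1 - (k + 1) = p - k := fun k => by omega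
    simp only [hk, Nat.sub_zero]
    simp only [tw, gg, add_mul, Finset.sum_add_distrib,
      smul_mul_assoc, mul_smul_comm, ← Finset.smul_sum]
    module

lemma act_right {L : ℕ} {a : R} {h y : ℕ → A} (H : Act L (-a) h y) :
    ∀ p ≤ L, ∀ s, adL (h p) (y s)
      = -(a • ∑ k ∈ Finset.range (p + 1), gg h (p - k) * tw (half * hbar * a) y k s) := by
  intro p
  induction p with
  | zero => intro _ s; simp [H.zero, tw, gg]
  | succ p ih =>
    intro hp s
    have e := H.succ p s (by omega)
    have i1 := ih (by omega) (s + 1)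
    have i2 := ih (by omega) s
    have e' : adL (h (p + 1)) (y s) = adL (h p) (y (s + 1))
        + (half * hbar * a) • adL (h p) (y s) - (hbar * a) • (h p * y s) := by
      rw [sub_eq_iff_eq_add.1 e, adL_apply (h p) (y s), ← one_mul (hbar * a), ← two_half]
      module
    rw [e', i1, i2, Finset.sum_range_succ' _ (p + 1)]
    have hk : ∀ k, p + 1 - (k + 1) = p - k := fun k => by omega
    simp only [hk, Nat.sub_zero]
    simp only [tw, gg, mul_add, Finset.sum_add_distrib,
      smul_mul_assoc, mul_smul_comm, ← Finset.smul_sum]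
    module

/-! ### Commutators of Cartan currents -/

section Level

variable {M : ℕ} {p q : Bool} {x y χ : ℕ → A} (c : R)

lemma sbr_tw_left (hB : ∀ r s, r + s ≤ M → sbr p q (x r) (y s) = χ (r + s)) :
    ∀ k r s, k + r + s ≤ M → sbr p q (tw c x k r) (y s) = tw c χ k (r + s) := by
  intro k
  induction k with
  | zero => intro r s h; simp only [tw]; exact hB r s (by omega)
  | succ k ih =>
    intro r s h
    simp only [tw, sbr_add_left, sbr_smul_left]
    rw [ih (r + 1) s (by omega), ih r s (by omega), add_right_comm]

lemma sbr_tw_right (hB : ∀ r s, r + s ≤ M → sbr p q (x r) (y s) = χ (r + s)) :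
    ∀ k r s, k + r + s ≤ M → sbr p q (x r) (tw c y k s) = tw c χ k (r + s) := by
  intro k
  induction k with
  | zero => intro r s h; simp only [tw]; exact hB r s (by omega)
  | succ k ih =>
    intro r s h
    simp only [tw, sbr_add_right, sbr_smul_right]
    rw [ih r (s + 1) (by omega), ih r s (by omega), add_assoc]

/-- One level above the range where `[x_r, y_s]` is known to depend on `r + s` only, the
lower-order terms of `(v + c)^k` still cancel. -/
lemma sbr_tw_top (hB : ∀ r s, r + s ≤ M → sbr p q (x r) (y s) = χ (r + s)) (k r s : ℕ)
    (h : k + r + s ≤ M + 1) :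
    sbr p q (tw c x k r) (y s) - sbr p q (x r) (tw c y k s)
      = sbr p q (x (r + k)) (y s) - sbr p q (x r) (y (s + k)) := by
  have key : ∀ k, ∃ low : ℕ → A, ∀ r s, k + r + s ≤ M + 1 →
      sbr p q (tw c x k r) (y s) = sbr p q (x (r + k)) (y s) + low (r + s) ∧
      sbr p q (x r) (tw c y k s) = sbr p q (x r) (y (s + k)) + low (r + s) := by
    intro k
    induction k with
    | zero => exact ⟨fun _ => 0, fun r s _ => by simp [tw]⟩
    | succ k ih =>
      obtain ⟨low, hl⟩ := ih
      refine ⟨fun t => low (t + 1) + c • tw c χ k t, fun r s h => ⟨?_, ?_⟩⟩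
      · simp only [tw, sbr_add_left, sbr_smul_left]
        rw [(hl (r + 1) s (by omega)).1, sbr_tw_left c hB k r s (by omega), add_assoc,
          show r + 1 + k = r + (k + 1) by omega, show r + 1 + s = r + s + 1 by omega]
      · simp only [tw, sbr_add_right, sbr_smul_right]
        rw [(hl r (s + 1) (by omega)).2, sbr_tw_right c hB k r s (by omega), add_assoc,
          show s + 1 + k = s + (k + 1) by omega, show r + (s + 1) = r + s + 1 by omega]
  obtain ⟨low, hl⟩ := key k
  rw [(hl r s h).1, (hl r s h).2]
  abel

lemma commute_tw {h : A} {n : ℕ} (hC : ∀ t, t ≤ n → h * χ t = χ t * h) :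
    ∀ k t, k + t ≤ n → h * tw c χ k t = tw c χ k t * h := by
  intro k
  induction k with
  | zero => intro t ht; simp only [tw]; exact hC t (by omega)
  | succ k ih =>
    intro t ht
    simp only [tw, mul_add, add_mul, mul_smul_comm, smul_mul_assoc]
    rw [ih (t + 1) (by omega), ih t (by omega)]

variable {L : ℕ} {a : R} {h : ℕ → A}

/-- The commutator of `h_n` with `[x_r, y_s]`. The terms involving products of Cartan and root
elements cancel by a symmetry of the double sum, so that only `(v + ℏa/2)^n` survives. -/
lemma adL_sbr_tw (hx : Act L a h x) (hy : Act L (-a) h y)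
    (hB : ∀ r s, r + s ≤ M → sbr p q (x r) (y s) = χ (r + s)) (n : ℕ) (hn : n ≤ L)
    (hC : ∀ k t, k < n → k + t ≤ M → h k * χ t = χ t * h k) (r s : ℕ) (hM : n + r + s ≤ M + 1) :
    adL (h n) (sbr p q (x r) (y s))
      = a • (sbr p q (tw (half * hbar * a) x n r) (y s)
          - sbr p q (x r) (tw (half * hbar * a) y n s)) := by
  set c := half * hbar * a with hc
  set T : ℕ → A := fun k => tw c x k r * gg h (n - k) * y s
    - sg p q • (y s * (tw c x k r * gg h (n - k)))
    - x r * (gg h (n - k) * tw c y k s)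
    + sg p q • (gg h (n - k) * tw c y k s * x r) with hT
  have e1 : adL (h n) (sbr p q (x r) (y s)) = a • ∑ k ∈ Finset.range (n + 1), T k := by
    rw [adL_sbr, act_left hx n hn, act_right hy n hn]
    simp only [hT, sbr, Finset.sum_add_distrib, Finset.sum_sub_distrib, Finset.sum_mul,
      Finset.mul_sum, ← Finset.smul_sum, smul_mul_assoc, mul_smul_comm, neg_mul, mul_neg]
    module
  have e2 : T n = sbr p q (tw c x n r) (y s) - sbr p q (x r) (tw c y n s) := by
    simp only [hT, Nat.sub_self, gg, mul_one, one_mul, sbr]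
    module
  have e3 : ∀ k ∈ Finset.range n, T k
      = (hbar * a) • ((∑ l ∈ Finset.range (n - k), tw c x l r * gg h (n - 1 - k - l) * tw c y k s)
        - ∑ l ∈ Finset.range (n - k), tw c x k r * gg h (n - 1 - k - l) * tw c y l s) := by
    intro k hk
    have hk := Finset.mem_range.1 hk
    obtain ⟨d, rfl⟩ : ∃ d, n = k + d + 1 := ⟨n - k - 1, by omega⟩
    have f1 := sbr_tw_left c hB k r s (by omega)
    have f2 := sbr_tw_right c hB k r s (by omega)
    have f3 := commute_tw (χ := χ) c (h := h d) (n := M - d)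
      (fun t ht => hC d t (by omega) (by omega)) k (r + s) (by omega)
    have g1 := act_left hx d (by omega) r
    have g2 := act_right hy d (by omega) s
    rw [← hc] at g1 g2
    simp only [show k + d + 1 - 1 - k = d by omega, show k + d + 1 - k = d + 1 by omega]
    have : (hbar * a) • ((∑ l ∈ Finset.range (d + 1), tw c x l r * gg h (d - l) * tw c y k s)
        - ∑ l ∈ Finset.range (d + 1), tw c x k r * gg h (d - l) * tw c y l s)
        = hbar • (adL (h d) (x r) * tw c y k s + tw c x k r * adL (h d) (y s)) := by
      rw [g1, g2]
      simp only [Finset.sum_mul, Finset.mul_sum, smul_mul_assoc, mul_smul_comm, mul_neg, mul_assoc]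
      module
    rw [this]
    have k1 : sg p q • (y s * tw c x k r) = tw c x k r * y s - tw c χ k (r + s) := by
      rw [← f1, sbr]; abel
    have k2 : sg p q • (tw c y k s * x r) = x r * tw c y k s - tw c χ k (r + s) := by
      rw [← f2, sbr]; abel
    have k3 : T k = hbar • (tw c x k r * h d * y s - (sg p q • (y s * tw c x k r)) * h d
        - x r * (h d * tw c y k s) + h d * (sg p q • (tw c y k s * x r))) := by
      simp only [hT, show k + d + 1 - k = d + 1 by omega, gg, smul_mul_assoc, mul_smul_comm,
        mul_assoc]
      module
    rw [k3, k1, k2, adL_apply, adL_apply, sub_mul, mul_sub, f3]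
    congr 1
    noncomm_ring
  rw [e1, Finset.sum_range_succ, Finset.sum_congr rfl e3, e2, ← Finset.smul_sum,
    Finset.sum_sub_distrib]
  rw [Finset.sum_comm' (t' := Finset.range n) (s' := fun l => Finset.range (n - l))]
  · have : ∀ k l, n - 1 - k - l = n - 1 - l - k := fun k l => by omega
    simp only [this, sub_self, smul_zero, zero_add]
  · intro k l
    simp only [Finset.mem_range]; omega

lemma cartan_commute (hx : Act L a h x) (hy : Act L (-a) h y)
    (hB : ∀ r s, r + s ≤ M → sbr p q (x r) (y s) = χ (r + s)) (hML : M ≤ L) :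
    ∀ n t, n + t ≤ M → h n * χ t = χ t * h n := by
  intro n
  induction n using Nat.strong_induction_on with
  | _ n ih =>
    intro t ht
    have e := adL_sbr_tw hx hy hB n (by omega) (fun k t hk hkt => ih k hk t hkt) t 0 (by omega)
    rw [sbr_tw_left _ hB n t 0 (by omega), sbr_tw_right _ hB n t 0 (by omega), sub_self, smul_zero,
      hB t 0 (by omega), adL_apply, add_zero, sub_eq_zero] at e
    exact e

end Level

end Currents

end ASY
namespace ASY

section Action

variable {A : Type*} [Ring A] [Algebra R A]

/-! ### The second logarithmic Cartan element -/

/-- Three times the element `h̃₂ = h₂ − ℏ h₀ h₁ + (ℏ²/3) h₀³`. -/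
def ht2 (h : ℕ → A) : A :=
  (3 : R) • h 2 - (6 * (half * hbar)) • (h 0 * h 1) + (4 * (half * hbar) ^ 2) • (h 0 * h 0 * h 0)

/-- Up to a scalar correction, `h̃₂` shifts the loop index by two. -/
lemma adL_ht2 {L : ℕ} {a : R} {h x : ℕ → A} (H : Act L a h x) (hL : 2 ≤ L) (s : ℕ) :
    adL (ht2 h) (x s) = (3 * a) • x (s + 2) + ((half * hbar) ^ 2 * a ^ 3) • x s := by
  have H0 : ∀ t, h 0 * x t = x t * h 0 + a • x t := fun t => by
    rw [← H.zero, adL_apply]; abel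
  have H0' : ∀ t z, h 0 * (x t * z) = x t * (h 0 * z) + a • (x t * z) := fun t z => by
    rw [← mul_assoc, H0, add_mul, mul_assoc, smul_mul_assoc]
  have H1 : ∀ t, h 1 * x t = x t * h 1 + a • x (t + 1)
      + (half * hbar * a) • (2 * (x t * h 0) + a • x t) := fun t => by
    have e := H.succ 0 t (by omega)
    rw [H.zero, adL_apply, H0] at e
    have e' := sub_eq_iff_eq_add.1 (sub_eq_iff_eq_add.1 e)
    rw [zero_add] at e'
    rw [e']
    have : (2 : A) * (x t * h 0) = (2 : R) • (x t * h 0) := by rw [two_smul, two_mul]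
    rw [this]
    module
  have H2 : h 2 * x s = x s * h 2 + (h 1 * x (s + 1) - x (s + 1) * h 1)
      + (half * hbar * a) • (h 1 * x s + x s * h 1) := by
    have e := H.succ 1 s (by omega)
    rw [one_add_one_eq_two] at e
    rw [adL_apply, adL_apply] at e
    rw [← e]; abel
  have two : ∀ z : A, (2 : A) * z = (2 : R) • z := fun z => by rw [two_smul, two_mul]
  rw [adL_apply, ht2]
  simp only [sub_mul, add_mul, mul_add, mul_sub, smul_mul_assoc, mul_smul_comm, mul_assoc, H2, H1,
    H0, H0', two, smul_add, smul_sub]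
  module

/-! ### Action of the Cartan current of one node on the root currents of another -/

lemma adL_cartan_left {ε δ : R} (hδ : δ * δ = 1) {z y w : A} (hwy : w * y - δ • (y * w) = 0) :
    adL (z * y - ε • (y * z)) w
      = δ • ((z * w - δ • (w * z)) * y) - ε • (y * (z * w - δ • (w * z))) := by
  have e1 : w * y = δ • (y * w) := sub_eq_zero.1 hwy
  have e1' : ∀ t, w * (y * t) = δ • (y * (w * t)) := fun t => by
    rw [← mul_assoc, e1, smul_mul_assoc, mul_assoc]
  simp only [adL_apply, sub_mul, mul_sub, smul_mul_assoc, mul_smul_comm, mul_assoc, e1, e1',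
    smul_sub, smul_smul, hδ, one_smul]
  abel

lemma acomm_cartan_left {ε δ : R} (hδ : δ * δ = 1) {z y w : A} (hwy : w * y - δ • (y * w) = 0) :
    (z * y - ε • (y * z)) * w + w * (z * y - ε • (y * z))
      = δ • ((z * w + δ • (w * z)) * y) - ε • (y * (z * w + δ • (w * z))) := by
  have e1 : w * y = δ • (y * w) := sub_eq_zero.1 hwy
  have e1' : ∀ t, w * (y * t) = δ • (y * (w * t)) := fun t => by
    rw [← mul_assoc, e1, smul_mul_assoc, mul_assoc]
  simp only [sub_mul, mul_sub, add_mul, mul_add, smul_mul_assoc, mul_smul_comm, mul_assoc, e1, e1',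
    smul_add, smul_smul, hδ, one_smul]
  abel

lemma comb_left {c δ ε : R} {U U' V y : A} (e : U - U' = c • V) :
    δ • (U * y) - ε • (y * U) - (δ • (U' * y) - ε • (y * U'))
      = c • (δ • (V * y) - ε • (y * V)) := by
  rw [sub_eq_iff_eq_add.1 e]
  simp only [add_mul, mul_add, smul_mul_assoc, mul_smul_comm]
  module

lemma comb_right {c ε : R} {U U' V z : A} (e : U - U' = c • V) :
    z * U - ε • (U * z) - (z * U' - ε • (U' * z)) = c • (z * V - ε • (V * z)) := by
  rw [sub_eq_iff_eq_add.1 e]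
  simp only [add_mul, mul_add, smul_mul_assoc, mul_smul_comm]
  module

/-- Action on a positive root current `w` of the Cartan current `h_r = [z_r, y]`, when `w`
supercommutes with `y`. -/
lemma act_of_pos {pj pi : Bool} {a : R} {h z w : ℕ → A} {y : A}
    (hh : ∀ r, h r = sbr pj pj (z r) y) (hwy : ∀ s, sbr pi pj (w s) y = 0)
    (hzw : ∀ r s, sbr pj pi (z (r + 1)) (w s) - sbr pj pi (z r) (w (s + 1))
      = (half * hbar * a) • sac pj pi (z r) (w s))
    (h0 : ∀ s, adL (h 0) (w s) = a • w s) (L : ℕ) : Act L a h w := by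
  refine ⟨h0, fun r s _ => ?_⟩
  have hδ := sg_mul_self pj pi
  have k : ∀ s, w s * y - sg pj pi • (y * w s) = 0 := fun s => by
    rw [sg_comm]; exact hwy s
  have e := hzw r s
  simp only [sbr, sac] at e
  rw [hh, hh, sbr, sbr, adL_cartan_left hδ (k s), adL_cartan_left hδ (k (s + 1)),
    acomm_cartan_left hδ (k s)]
  exact comb_left e

lemma adL_cartan_right {ε δ : R} (hδ : δ * δ = 1) {z y w : A} (hzw : z * w - δ • (w * z) = 0) :
    adL (z * y - ε • (y * z)) w
      = z * (y * w - δ • (w * y)) - (ε * δ) • ((y * w - δ • (w * y)) * z) := by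
  have e1 : z * w = δ • (w * z) := sub_eq_zero.1 hzw
  have e1' : ∀ t, z * (w * t) = δ • (w * (z * t)) := fun t => by
    rw [← mul_assoc, e1, smul_mul_assoc, mul_assoc]
  simp only [adL_apply, sub_mul, mul_sub, smul_mul_assoc, mul_smul_comm, mul_assoc, e1, e1',
    smul_sub, smul_smul, hδ, one_smul, mul_one]
  abel

lemma acomm_cartan_right {ε δ : R} (hδ : δ * δ = 1) {z y w : A}
    (hzw : z * w - δ • (w * z) = 0) :
    (z * y - ε • (y * z)) * w + w * (z * y - ε • (y * z))
      = z * (y * w + δ • (w * y)) - (ε * δ) • ((y * w + δ • (w * y)) * z) := by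
  have e1 : z * w = δ • (w * z) := sub_eq_zero.1 hzw
  have e1' : ∀ t, z * (w * t) = δ • (w * (z * t)) := fun t => by
    rw [← mul_assoc, e1, smul_mul_assoc, mul_assoc]
  simp only [sub_mul, mul_sub, add_mul, mul_add, smul_mul_assoc, mul_smul_comm, mul_assoc, e1, e1',
    smul_add, smul_smul, hδ, one_smul, mul_one]
  abel

/-- Action on a negative root current `w` of the Cartan current `h_r = [z_r, y_0]`, in the range
where also `h_{r+1} = [z_r, y_1]`, when `w` supercommutes with `z`. -/
lemma act_of_neg {pj pi : Bool} {a : R} {h z y w : ℕ → A} {L : ℕ}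
    (hh : ∀ r, h r = sbr pj pj (z r) (y 0)) (hh1 : ∀ r, r < L → h (r + 1) = sbr pj pj (z r) (y 1))
    (hzw : ∀ r s, sbr pj pi (z r) (w s) = 0)
    (hyw : ∀ s, sbr pj pi (y 1) (w s) - sbr pj pi (y 0) (w (s + 1))
      = (half * hbar * a) • sac pj pi (y 0) (w s))
    (h0 : ∀ s, adL (h 0) (w s) = a • w s) : Act L a h w := by
  refine ⟨h0, fun r s hr => ?_⟩
  have hδ := sg_mul_self pj pi
  have k : ∀ s, z r * w s - sg pj pi • (w s * z r) = 0 := fun s => hzw r s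
  have e := hyw s
  simp only [sbr, sac] at e
  rw [hh1 r hr, hh, sbr, sbr, adL_cartan_right hδ (k s), adL_cartan_right hδ (k (s + 1)),
    acomm_cartan_right hδ (k s)]
  exact comb_right e

/-! ### Action of the Cartan current of a node on its own root currents -/

/-- A family with `Q(r+t, s) + Q(s+t, r) = 0` vanishes. -/
lemma eq_zero_of_skew {Q : ℕ → ℕ → A} (h : ∀ r s t, Q (r + t) s + Q (s + t) r = 0) :
    ∀ r s, Q r s = 0 := by
  have h0 : ∀ b, Q b 0 = 0 := fun b => by
    apply eq_zero_of_two
    simpa using h 0 0 b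
  intro r s
  have := h 0 s r
  rwa [h0, add_zero, zero_add] at this

lemma act_self_even {e c : R} (he : IsUnit e) {h z u : ℕ → A}
    (hu : ∀ t r, adL (u t) (z r) = e • h (r + t))
    (hz : ∀ r s, sbr false false (z (r + 1)) (z s) - sbr false false (z r) (z (s + 1))
      = c • sac false false (z r) (z s)) (r s : ℕ) :
    adL (h (r + 1)) (z s) - adL (h r) (z (s + 1)) = c • (h r * z s + z s * h r) := by
  have key := eq_zero_of_skew (Q := fun r s => adL (h (r + 1)) (z s) - adL (h r) (z (s + 1))
    - c • (h r * z s + z s * h r)) ?_ r s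
  · exact sub_eq_zero.1 key
  · intro r s t
    have e1 := congrArg (adL (u t)) (hz r s)
    rw [map_sub, map_smul] at e1
    simp only [adL_sbr, adL_sac, hu, sbr_smul_left, sbr_smul_right, sac_smul_left,
      sac_smul_right] at e1
    apply (he.smul_eq_zero).1
    simp only [sbr, sac, sg_false_left, one_smul, add_right_comm _ 1 t] at e1
    simp only [adL_apply]
    have e2 := sub_eq_zero.2 e1
    rw [← e2]
    module

lemma act_self_odd {h z u : ℕ → A} (hu : ∀ t r, sbr true true (u t) (z r) = h (r + t))
    (hz : ∀ r s, sbr true true (z r) (z s) = 0) (r s : ℕ) : adL (h r) (z s) = 0 := by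
  refine eq_zero_of_skew (Q := fun r s => adL (h r) (z s)) (fun r s t => ?_) r s
  have e1 := hz r s
  have e2 := hu t r
  have e3 := hu t s
  simp only [sbr, sg, Bool.and_self, if_true, neg_smul, one_smul, sub_neg_eq_add] at e1 e2 e3
  simp only [adL_apply, ← e2, ← e3]
  calc _ = u t * (z r * z s + z s * z r) - (z r * z s + z s * z r) * u t := by noncomm_ring
    _ = 0 := by rw [e1]; simp

end Action

/-! ### The Cartan matrix -/

namespace SimpleRootSystem

variable {m n : ℕ} (P : SimpleRootSystem m n)

lemma w_cases (k : Fin (m + n)) : P.w k = 1 ∨ P.w k = -1 := by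
  unfold w; split_ifs <;> simp

variable [NeZero (m + n)]

lemma a_comm (i j : Fin (m + n)) : P.a i j = P.a j i := by
  simp only [a]; exact Finset.sum_congr rfl fun k _ => by ring

lemma a_eq (i j : Fin (m + n)) : P.a i j
    = P.w i * ((if i = j then 1 else 0) - (if i = j + 1 then 1 else 0))
      - P.w (i + 1) * ((if i + 1 = j then 1 else 0) - (if i = j then 1 else 0)) := by
  rw [a_comm]
  simp only [a, coeffα, mul_sub, Finset.sum_sub_distrib, mul_ite, mul_one,
    mul_zero, Finset.sum_ite_eq', Finset.mem_univ, if_true, add_left_inj]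

lemma natCast_ne_zero (hN : 5 ≤ m + n) (k : ℕ) (h0 : k ≠ 0) (hk : k < 5) :
    (Fin.ofNat (m + n) k) ≠ 0 := by
  intro h
  have := congrArg Fin.val h
  simp only [Fin.ofNat, Fin.val_zero] at this
  rw [Nat.mod_eq_of_lt (by omega)] at this
  exact h0 this

lemma one_ne (hN : 5 ≤ m + n) : (1 : Fin (m + n)) ≠ 0 := natCast_ne_zero hN 1 (by simp) (by simp)

lemma two_ne (hN : 5 ≤ m + n) : (1 + 1 : Fin (m + n)) ≠ 0 := by
  have := natCast_ne_zero hN 2 (by simp) (by simp)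
  intro h; apply this; rw [← h]; ext; simp [Fin.val_add]

lemma three_ne (hN : 5 ≤ m + n) : (1 + 1 + 1 : Fin (m + n)) ≠ 0 := by
  have := natCast_ne_zero hN 3 (by simp) (by simp)
  intro h; apply this; rw [← h]; ext; simp [Fin.val_add]

lemma four_ne (hN : 5 ≤ m + n) : (1 + 1 + 1 + 1 : Fin (m + n)) ≠ 0 := by
  have := natCast_ne_zero hN 4 (by simp) (by simp)
  intro h; apply this; rw [← h]; ext; simp [Fin.val_add]

lemma ne_of_sub {x y d : Fin (m + n)} (hd : d ≠ 0) (h : x - y = d) : x ≠ y := by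
  rintro rfl
  exact hd (h.symm.trans (sub_self x))

lemma a_far {i j : Fin (m + n)} (h1 : j ≠ i) (h2 : j ≠ i + 1) (h3 : i ≠ j + 1) :
    P.a i j = 0 := by
  rw [a_eq, if_neg h1.symm, if_neg h3, if_neg h2.symm]; simp

lemma a_succ (hN : 5 ≤ m + n) (i : Fin (m + n)) : P.a i (i + 1) = 1 ∨ P.a i (i + 1) = -1 := by
  have h1 : i ≠ i + 1 := (ne_of_sub (one_ne hN) (by abel)).symm
  have h2 : i ≠ i + 1 + 1 := (ne_of_sub (two_ne hN) (by abel)).symm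
  rw [a_eq, if_neg h1, if_neg h2, if_pos rfl]
  rcases P.w_cases (i + 1) with h | h <;> simp [h]

lemma a_succ' (hN : 5 ≤ m + n) (i : Fin (m + n)) : P.a (i + 1) i = 1 ∨ P.a (i + 1) i = -1 := by
  rw [a_comm]; exact P.a_succ hN i

lemma a_pred (hN : 5 ≤ m + n) (i : Fin (m + n)) : P.a (i - 1) i = 1 ∨ P.a (i - 1) i = -1 := by
  simpa using P.a_succ hN (i - 1)

lemma a_self_odd {i : Fin (m + n)} (hN : 5 ≤ m + n) (h : P.par i = true) : P.a i i = 0 := by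
  have h1 : i ≠ i + 1 := (ne_of_sub (one_ne hN) (by abel)).symm
  rw [a_eq, if_pos rfl, if_neg h1, if_neg h1.symm]
  simp only [par, bne_iff_ne] at h
  simp only [w]
  revert h
  cases P.τ i <;> cases P.τ (i + 1) <;> simp

lemma a_of_ne (hN : 5 ≤ m + n) {i j : Fin (m + n)} (hij : i ≠ j) :
    P.a i j = 0 ∨ P.a i j = 1 ∨ P.a i j = -1 := by
  by_cases h2 : j = i + 1
  · subst h2; exact Or.inr (P.a_succ hN i)
  · by_cases h3 : i = j + 1
    · subst h3; exact Or.inr (P.a_succ' hN j)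
    · exact Or.inl (P.a_far hij.symm h2 h3)

/-- Two distinct nodes can be separated by a third one, adjacent to the first and not to the
second; this is where the Dynkin cycle must have at least five nodes. -/
lemma exists_sep (hN : 5 ≤ m + n) {i j : Fin (m + n)} (hij : i ≠ j) :
    ∃ k, k ≠ i ∧ k ≠ j ∧ P.a k j = 0 ∧ (P.a k i = 1 ∨ P.a k i = -1) := by
  by_cases h : j = i + 1 ∨ j = i + 1 + 1
  · refine ⟨i - 1, (ne_of_sub (one_ne hN) (by abel)).symm, ?_, ?_, P.a_pred hN i⟩
    · rcases h with rfl | rfl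
      · exact (ne_of_sub (two_ne hN) (by abel)).symm
      · exact (ne_of_sub (three_ne hN) (by abel)).symm
    · rcases h with rfl | rfl
      · exact P.a_far (ne_of_sub (two_ne hN) (by abel)) (ne_of_sub (one_ne hN) (by abel))
          (ne_of_sub (three_ne hN) (by abel)).symm
      · exact P.a_far (ne_of_sub (three_ne hN) (by abel)) (ne_of_sub (two_ne hN) (by abel))
          (ne_of_sub (four_ne hN) (by abel)).symm
  · push Not at h
    refine ⟨i + 1, ne_of_sub (one_ne hN) (by abel), h.1.symm, ?_, P.a_succ' hN i⟩
    exact P.a_far h.1 h.2 (fun e => hij (add_right_cancel e))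

end SimpleRootSystem

end ASY
namespace ASY

section OneSided

variable {A : Type*} [Ring A] [Algebra R A] {m n : ℕ} [NeZero (m + n)]

/-! ### Relations among the root currents of one sign -/

/-- The relations satisfied by the root currents `X = x^±` of one sign `e = ±1`: the elements
`t i = h̃_{i,1}` shift the loop index, and the remaining relations hold at the lowest level. -/
structure OneSide (P : SimpleRootSystem m n) (e : R) (X : Fin (m + n) → ℕ → A)
    (t : Fin (m + n) → A) : Prop where
  sign : e = 1 ∨ e = -1
  shift : ∀ i j s, adL (t i) (X j s) = (e * ((P.a i j : ℤ) : R)) • X j (s + 1)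
  mix : ∀ i j, sbr (P.par i) (P.par j) (X i 1) (X j 0) - sbr (P.par i) (P.par j) (X i 0) (X j 1)
    = (half * hbar * (e * ((P.a i j : ℤ) : R))) • sac (P.par i) (P.par j) (X i 0) (X j 0)
  serre : ∀ i j, i ≠ j →
    adN (P.par i) (P.par j) (X i 0) (1 + (P.a i j).natAbs) (X j 0) = 0
  odd : ∀ i, P.par i = true → sbr true true (X i 0) (X i 0) = 0
  oddS : ∀ i, P.par i = true →
    sbr (xor (P.par (i - 1)) true) (xor true (P.par (i + 1)))
        (sbr (P.par (i - 1)) true (X (i - 1) 0) (X i 0))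
        (sbr true (P.par (i + 1)) (X i 0) (X (i + 1) 0)) = 0

/-- The elements `u k` shift by two the loop index of every root current of a node other
than `k`, up to a scalar correction. -/
def ShiftsTwo (P : SimpleRootSystem m n) (e : R) (X : Fin (m + n) → ℕ → A)
    (u : Fin (m + n) → A) : Prop :=
  ∀ k i, k ≠ i → ∀ s, adL (u k) (X i s) = (3 * (e * ((P.a k i : ℤ) : R))) • X i (s + 2)
    + ((half * hbar) ^ 2 * (e * ((P.a k i : ℤ) : R)) ^ 3) • X i s

namespace OneSide

variable {P : SimpleRootSystem m n} {e : R} {X : Fin (m + n) → ℕ → A} {t u : Fin (m + n) → A}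

lemma isUnit_coeff (he : e = 1 ∨ e = -1) {a : ℤ} (ha : a = 1 ∨ a = -1) :
    IsUnit (e * ((a : ℤ) : R)) := by
  rcases he with rfl | rfl <;> rcases ha with rfl | rfl <;> simp

lemma shift_zero (H : OneSide P e X t) {i j : Fin (m + n)} (h : P.a i j = 0) (s : ℕ) :
    adL (t i) (X j s) = 0 := by rw [H.shift, h]; simp

theorem mix_of_ne (H : OneSide P e X t) (hN : 5 ≤ m + n) {i j : Fin (m + n)} (hij : i ≠ j)
    (r s : ℕ) :
    sbr (P.par i) (P.par j) (X i (r + 1)) (X j s) - sbr (P.par i) (P.par j) (X i r) (X j (s + 1))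
    = (half * hbar * (e * ((P.a i j : ℤ) : R))) • sac (P.par i) (P.par j) (X i r) (X j s) := by
  obtain ⟨k, -, -, hk0, hk⟩ := P.exists_sep hN hij
  obtain ⟨l, -, -, hl0, hl⟩ := P.exists_sep hN hij.symm
  rw [← sub_eq_zero]
  refine shift_two (Z := fun r s => sbr (P.par i) (P.par j) (X i (r + 1)) (X j s)
    - sbr (P.par i) (P.par j) (X i r) (X j (s + 1))
    - (half * hbar * (e * ((P.a i j : ℤ) : R))) • sac (P.par i) (P.par j) (X i r) (X j s))
    (adL (t k)) (adL (t l)) (isUnit_coeff H.sign hk) (isUnit_coeff H.sign hl) ?_ ?_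
    (sub_eq_zero.2 (H.mix i j)) r s
  · intro r s
    simp only [map_sub, map_smul, adL_sbr, adL_sac, H.shift_zero hk0, H.shift k i,
      sbr_smul_left, sac_smul_left, sbr_zero_right, sac_zero_right]
    module
  · intro r s
    simp only [map_sub, map_smul, adL_sbr, adL_sac, H.shift_zero hl0, H.shift l j,
      sbr_smul_right, sac_smul_right, sbr_zero_left, sac_zero_left]
    module

theorem sbr_far (H : OneSide P e X t) (hN : 5 ≤ m + n) {i j : Fin (m + n)} (hij : i ≠ j)
    (ha : P.a i j = 0) (r s : ℕ) : sbr (P.par i) (P.par j) (X i r) (X j s) = 0 := by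
  obtain ⟨k, -, -, hk0, hk⟩ := P.exists_sep hN hij
  obtain ⟨l, -, -, hl0, hl⟩ := P.exists_sep hN hij.symm
  refine shift_two (Z := fun r s => sbr (P.par i) (P.par j) (X i r) (X j s))
    (adL (t k)) (adL (t l)) (isUnit_coeff H.sign hk) (isUnit_coeff H.sign hl) ?_ ?_ ?_ r s
  · intro r s
    simp only [adL_sbr, H.shift_zero hk0, H.shift k i, sbr_smul_left, sbr_zero_right, add_zero]
  · intro r s
    simp only [adL_sbr, H.shift_zero hl0, H.shift l j, sbr_smul_right, sbr_zero_left, zero_add]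
  · simpa [ha, adN] using H.serre i j hij

theorem oddS_all (H : OneSide P e X t) (hN : 5 ≤ m + n) {i : Fin (m + n)} (hi : P.par i = true)
    (r s : ℕ) :
    sbr (xor (P.par (i - 1)) true) (xor true (P.par (i + 1)))
        (sbr (P.par (i - 1)) true (X (i - 1) r) (X i 0))
        (sbr true (P.par (i + 1)) (X i 0) (X (i + 1) s)) = 0 := by
  have hk : P.a (i - 1 - 1) (i - 1) = 1 ∨ P.a (i - 1 - 1) (i - 1) = -1 := P.a_pred hN _
  have hl : P.a (i + 1 + 1) (i + 1) = 1 ∨ P.a (i + 1 + 1) (i + 1) = -1 := P.a_succ' hN _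
  have hk0 : P.a (i - 1 - 1) i = 0 := P.a_far
    (SimpleRootSystem.ne_of_sub (SimpleRootSystem.two_ne hN) (by abel))
    (SimpleRootSystem.ne_of_sub (SimpleRootSystem.one_ne hN) (by abel))
    (SimpleRootSystem.ne_of_sub (SimpleRootSystem.three_ne hN) (by abel)).symm
  have hk1 : P.a (i - 1 - 1) (i + 1) = 0 := P.a_far
    (SimpleRootSystem.ne_of_sub (SimpleRootSystem.three_ne hN) (by abel))
    (SimpleRootSystem.ne_of_sub (SimpleRootSystem.two_ne hN) (by abel))
    (SimpleRootSystem.ne_of_sub (SimpleRootSystem.four_ne hN) (by abel)).symm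
  have hl0 : P.a (i + 1 + 1) i = 0 := P.a_far
    (SimpleRootSystem.ne_of_sub (SimpleRootSystem.two_ne hN) (by abel)).symm
    (SimpleRootSystem.ne_of_sub (SimpleRootSystem.three_ne hN) (by abel)).symm
    (SimpleRootSystem.ne_of_sub (SimpleRootSystem.one_ne hN) (by abel))
  have hl1 : P.a (i + 1 + 1) (i - 1) = 0 := P.a_far
    (SimpleRootSystem.ne_of_sub (SimpleRootSystem.three_ne hN) (by abel)).symm
    (SimpleRootSystem.ne_of_sub (SimpleRootSystem.four_ne hN) (by abel)).symm
    (SimpleRootSystem.ne_of_sub (SimpleRootSystem.two_ne hN) (by abel))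
  refine shift_two (Z := fun r s => sbr (xor (P.par (i - 1)) true) (xor true (P.par (i + 1)))
        (sbr (P.par (i - 1)) true (X (i - 1) r) (X i 0))
        (sbr true (P.par (i + 1)) (X i 0) (X (i + 1) s)))
    (adL (t (i - 1 - 1))) (adL (t (i + 1 + 1))) (isUnit_coeff H.sign hk)
    (isUnit_coeff H.sign hl) ?_ ?_ (H.oddS i hi) r s
  · intro r s
    simp only [adL_sbr, H.shift_zero hk0, H.shift_zero hk1, H.shift _ (i - 1), sbr_smul_left,
      sbr_zero_right, sbr_zero_left, add_zero]
  · intro r s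
    simp only [adL_sbr, H.shift_zero hl0, H.shift_zero hl1, H.shift _ (i + 1), sbr_smul_right,
      sbr_zero_right, sbr_zero_left, zero_add]

lemma isUnit_three_mul {b : R} (hb : IsUnit b) : IsUnit (3 * b) := by
  have := isUnit_natCast_R (k := 3) (by norm_num)
  exact (by simpa using this : IsUnit (3 : R)).mul hb

theorem odd_all (H : OneSide P e X t) (hu : ShiftsTwo P e X u) (hN : 5 ≤ m + n)
    {i : Fin (m + n)} (hi : P.par i = true) (r s : ℕ) : sbr true true (X i r) (X i s) = 0 := by
  have hk := isUnit_coeff H.sign (P.a_succ' hN i)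
  have hne : i + 1 ≠ i := SimpleRootSystem.ne_of_sub (SimpleRootSystem.one_ne hN) (by abel)
  refine shift_sym (Z := fun r s => sbr true true (X i r) (X i s)) (adL (t (i + 1)))
    (adL (u (i + 1))) (κ := 2 * ((half * hbar) ^ 2 * (e * ((P.a (i + 1) i : ℤ) : R)) ^ 3))
    hk (isUnit_three_mul hk) ?_ ?_ ?_ (H.odd i hi) r s
  · intro r s
    simp only [adL_sbr, H.shift, sbr_smul_left, sbr_smul_right]
    module
  · intro r s
    simp only [adL_sbr, hu _ _ hne, sbr_smul_left, sbr_smul_right, sbr_add_left, sbr_add_right]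
    module
  · simp only [sbr, sg, Bool.and_self, if_true]
    module

theorem mix_self_even (H : OneSide P e X t) (hu : ShiftsTwo P e X u) (hN : 5 ≤ m + n)
    {i : Fin (m + n)} (hi : P.par i = false) (r s : ℕ) :
    sbr (P.par i) (P.par i) (X i (r + 1)) (X i s) - sbr (P.par i) (P.par i) (X i r) (X i (s + 1))
    = (half * hbar * (e * ((P.a i i : ℤ) : R))) • sac (P.par i) (P.par i) (X i r) (X i s) := by
  have hk := isUnit_coeff H.sign (P.a_succ' hN i)
  have hne : i + 1 ≠ i := SimpleRootSystem.ne_of_sub (SimpleRootSystem.one_ne hN) (by abel)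
  rw [← sub_eq_zero]
  refine shift_sym (Z := fun r s => sbr (P.par i) (P.par i) (X i (r + 1)) (X i s)
    - sbr (P.par i) (P.par i) (X i r) (X i (s + 1))
    - (half * hbar * (e * ((P.a i i : ℤ) : R))) • sac (P.par i) (P.par i) (X i r) (X i s))
    (adL (t (i + 1)))
    (adL (u (i + 1))) (κ := 2 * ((half * hbar) ^ 2 * (e * ((P.a (i + 1) i : ℤ) : R)) ^ 3))
    hk (isUnit_three_mul hk) ?_ ?_ ?_ (sub_eq_zero.2 (H.mix i i)) r s
  · intro r s
    simp only [map_sub, map_smul, adL_sbr, adL_sac, H.shift (i + 1), sbr_smul_left, sbr_smul_right,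
      sac_smul_left, sac_smul_right]
    module
  · intro r s
    simp only [map_sub, map_smul, adL_sbr, adL_sac, hu _ _ hne, sbr_smul_left, sbr_smul_right,
      sac_smul_left, sac_smul_right, sbr_add_left, sbr_add_right, sac_add_left, sac_add_right]
    rw [show r + 1 + 2 = r + 2 + 1 from rfl, show s + 1 + 2 = s + 2 + 1 from rfl]
    module
  · simp only [sbr, sac, hi, sg, Bool.and_self, zero_add, one_add_one_eq_two]
    simp only [Bool.false_eq_true, if_false, one_smul]
    rw [add_comm (X i 1 * X i 0)]
    abel

theorem mix_all (H : OneSide P e X t) (hu : ShiftsTwo P e X u) (hN : 5 ≤ m + n)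
    (i j : Fin (m + n)) (r s : ℕ) :
    sbr (P.par i) (P.par j) (X i (r + 1)) (X j s) - sbr (P.par i) (P.par j) (X i r) (X j (s + 1))
    = (half * hbar * (e * ((P.a i j : ℤ) : R))) • sac (P.par i) (P.par j) (X i r) (X j s) := by
  by_cases hij : i = j
  · subst hij
    cases hi : P.par i with
    | false => simpa [hi] using H.mix_self_even hu hN hi r s
    | true => rw [H.odd_all hu hN hi, H.odd_all hu hN hi, P.a_self_odd hN hi]; simp
  · exact H.mix_of_ne hN hij r s

/-- The quadratic Serre expression `[x, [x', y]] + [x', [x, y]]`. -/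
def ser (p q : Bool) (x x' y : A) : A :=
  sbr p (xor q p) x (sbr p q x' y) + sbr p (xor q p) x' (sbr p q x y)

theorem ser_even (H : OneSide P e X t) (hu : ShiftsTwo P e X u) (hN : 5 ≤ m + n)
    {i j : Fin (m + n)} (hij : i ≠ j) (ha : P.a i j = 1 ∨ P.a i j = -1)
    (r r' s : ℕ) : ser (P.par i) (P.par j) (X i r) (X i r') (X j s) = 0 := by
  obtain ⟨k, hki, hkj, hk0, hk⟩ := P.exists_sep hN hij
  obtain ⟨l, -, -, hl0, hl⟩ := P.exists_sep hN hij.symm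
  have huj : ∀ s, adL (u k) (X j s) = 0 := fun s => by rw [hu k j hkj, hk0]; simp
  have hk := isUnit_coeff H.sign hk
  have h00 : ser (P.par i) (P.par j) (X i 0) (X i 0) (X j 0) = 0 := by
    have := H.serre i j hij
    have hab : 1 + (P.a i j).natAbs = 2 := by rcases ha with h | h <;> simp [h]
    rw [hab] at this
    simp only [adN] at this
    rw [ser]
    simp only [Nat.zero_mod, zero_ne_one, decide_false, decide_true,
      Bool.and_false, Bool.and_true, Bool.xor_false] at this
    rw [this, add_zero]
  have h0s : ∀ s, ser (P.par i) (P.par j) (X i 0) (X i 0) (X j s) = 0 :=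
    shift_one (Z := fun s => ser (P.par i) (P.par j) (X i 0) (X i 0) (X j s)) (adL (t l))
      (isUnit_coeff H.sign hl) (fun s => by
        simp only [ser, map_add, adL_sbr, H.shift_zero hl0, H.shift l j, sbr_smul_right,
          sbr_zero_left, zero_add]
        module) h00
  refine shift_sym (Z := fun r r' => ser (P.par i) (P.par j) (X i r) (X i r') (X j s))
    (adL (t k)) (adL (u k))
    (κ := 2 * ((half * hbar) ^ 2 * (e * ((P.a k i : ℤ) : R)) ^ 3))
    hk (isUnit_three_mul hk) ?_ ?_ ?_ (h0s s) r r'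
  · intro r r'
    simp only [ser, map_add, adL_sbr, H.shift_zero hk0, H.shift k i, sbr_smul_left,
      sbr_smul_right, sbr_zero_right, add_zero]
    module
  · intro r r'
    simp only [ser, map_add, adL_sbr, huj, hu _ _ hki, sbr_smul_left, sbr_smul_right, sbr_add_left,
      sbr_add_right, sbr_zero_right, add_zero]
    module
  · simp only [ser]; rw [add_comm]

theorem serre_all (H : OneSide P e X t) (hu : ShiftsTwo P e X u) (hN : 5 ≤ m + n)
    {i j : Fin (m + n)} (hij : i ≠ j) (rr : Fin (1 + (P.a i j).natAbs) → ℕ) (s : ℕ) :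
    ∑ σ : Equiv.Perm (Fin (1 + (P.a i j).natAbs)),
        adSeq (P.par i) (P.par j) (List.ofFn fun t => X i (rr (σ t))) (X j s) = 0 := by
  have hcase : (P.a i j = 0 ∧ 1 + (P.a i j).natAbs = 1) ∨
      ((P.a i j = 1 ∨ P.a i j = -1) ∧ 1 + (P.a i j).natAbs = 2) := by
    rcases P.a_of_ne hN hij with h | h | h
    · left; simp [h]
    · right; simp [h]
    · right; simp [h]
  revert rr
  generalize 1 + (P.a i j).natAbs = k at hcase
  rcases hcase with ⟨h0, rfl⟩ | ⟨h1, rfl⟩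
  · intro rr
    simpa [adSeq] using H.sbr_far hN hij h0 (rr 0) s
  · intro rr
    have huniv : (Finset.univ : Finset (Equiv.Perm (Fin 2))) = {1, Equiv.swap 0 1} := by decide
    rw [huniv, Finset.sum_pair (by decide)]
    simpa [adSeq, ser] using H.ser_even hu hN hij h1 (rr 0) (rr 1) s

end OneSide

end OneSided

end ASY
namespace ASY

section TwoSided

variable {A : Type*} [Ring A] [Algebra R A] {m n : ℕ} [NeZero (m + n)]

/-! ### Deriving the Drinfeld relations from the minimalistic ones -/

/-- The minimalistic relations, for currents `X = x^+`, `Y = x^-`, `H = h` whose higher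
components are generated by the elements `h̃_{i,1}` and by `h_{i,r} = [x^+_{i,r}, x^-_{i,0}]`. -/
structure MinSys (P : SimpleRootSystem m n) (X Y H : Fin (m + n) → ℕ → A) : Prop where
  pos : OneSide P 1 X (fun i => H i 1 - (half * hbar) • (H i 0 * H i 0))
  neg : OneSide P (-1) Y (fun i => H i 1 - (half * hbar) • (H i 0 * H i 0))
  wp : ∀ i j s, adL (H i 0) (X j s) = ((P.a i j : ℤ) : R) • X j s
  wm : ∀ i j s, adL (H i 0) (Y j s) = (-((P.a i j : ℤ) : R)) • Y j s
  hH : ∀ i r, H i r = sbr (P.par i) (P.par i) (X i r) (Y i 0)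
  h01 : ∀ i, sbr (P.par i) (P.par i) (X i 0) (Y i 1) = H i 1
  h11 : ∀ i j, adL (H i 1) (H j 1) = 0
  pm0 : ∀ i j, i ≠ j → sbr (P.par i) (P.par j) (X i 0) (Y j 0) = 0

namespace MinSys

variable {P : SimpleRootSystem m n} {X Y H : Fin (m + n) → ℕ → A}

theorem pm_ne (S : MinSys P X Y H) (hN : 5 ≤ m + n) {i j : Fin (m + n)} (hij : i ≠ j) (r s : ℕ) :
    sbr (P.par i) (P.par j) (X i r) (Y j s) = 0 := by
  obtain ⟨k, -, -, hk0, hk⟩ := P.exists_sep hN hij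
  obtain ⟨l, -, -, hl0, hl⟩ := P.exists_sep hN hij.symm
  refine shift_two (Z := fun r s => sbr (P.par i) (P.par j) (X i r) (Y j s))
    (adL (H k 1 - (half * hbar) • (H k 0 * H k 0))) (adL (H l 1 - (half * hbar) • (H l 0 * H l 0)))
    (OneSide.isUnit_coeff S.pos.sign hk) (OneSide.isUnit_coeff S.neg.sign hl) ?_ ?_
    (S.pm0 i j hij) r s
  · intro r s
    simp only [adL_sbr, S.neg.shift_zero hk0, S.pos.shift k i, sbr_smul_left, sbr_zero_right,
      add_zero]
  · intro r s
    simp only [adL_sbr, S.pos.shift_zero hl0, S.neg.shift l j, sbr_smul_right, sbr_zero_left,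
      zero_add]

theorem act_pos (S : MinSys P X Y H) (hN : 5 ≤ m + n) {i j : Fin (m + n)} (hij : i ≠ j) (L : ℕ) :
    Act L ((P.a i j : ℤ) : R) (H i) (X j) := by
  refine act_of_pos (pi := P.par j) (S.hH i) (fun s => S.pm_ne hN hij.symm s 0) (fun r s => ?_)
    (S.wp i j) L
  simpa using S.pos.mix_of_ne hN hij r s

/-- The bracket `[x^+_{i,r}, x^-_{i,s}]` equals `h_{i,r+s}` up to level `p`. -/
def Level (P : SimpleRootSystem m n) (X Y H : Fin (m + n) → ℕ → A) (p : ℕ) : Prop :=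
  ∀ i r s, r + s ≤ p → sbr (P.par i) (P.par i) (X i r) (Y i s) = H i (r + s)

theorem act_neg (S : MinSys P X Y H) (hN : 5 ≤ m + n) {i j : Fin (m + n)} (hij : i ≠ j) {L : ℕ}
    (hL : Level P X Y H L) : Act L (-((P.a i j : ℤ) : R)) (H i) (Y j) := by
  refine act_of_neg (pi := P.par j) (S.hH i) (fun r hr => (hL i r 1 (by omega)).symm)
    (fun r s => S.pm_ne hN hij r s) (fun s => ?_) (S.wm i j)
  simpa using S.neg.mix_of_ne hN hij 0 s

lemma wh (S : MinSys P X Y H) (i j : Fin (m + n)) (r : ℕ) : adL (H i 0) (H j r) = 0 := by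
  rw [S.hH j r, adL_sbr, S.wp, S.wm, sbr_smul_left, sbr_smul_right]
  module

lemma adL_tilde (S : MinSys P X Y H) (i j : Fin (m + n)) (r : ℕ) :
    adL (H i 1 - (half * hbar) • (H i 0 * H i 0)) (H j r) = adL (H i 1) (H j r) := by
  have e : H i 0 * H j r = H j r * H i 0 := by
    have := S.wh i j r
    rwa [adL_apply, sub_eq_zero] at this
  have e2 : H i 0 * H i 0 * H j r = H j r * (H i 0 * H i 0) := by
    rw [mul_assoc, e, ← mul_assoc, e, mul_assoc]
  simp only [adL_apply, sub_mul, mul_sub, smul_mul_assoc, mul_smul_comm, e2]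
  abel

/-- The failure of `[x^+_{i,r}, x^-_{i,s}]`, `r + s = p + 1`, to depend on `r + s` only. -/
def defect (P : SimpleRootSystem m n) (X Y : Fin (m + n) → ℕ → A) (p : ℕ) (i : Fin (m + n)) : A :=
  sbr (P.par i) (P.par i) (X i (p + 1)) (Y i 0) - sbr (P.par i) (P.par i) (X i p) (Y i 1)

lemma adL_one (S : MinSys P X Y H) {p : ℕ} (hp : Level P X Y H p) (i j : Fin (m + n)) {r s : ℕ}
    (hrs : r + s = p) :
    adL (H j 1) (H i p) = ((P.a j i : ℤ) : R) •
      (sbr (P.par i) (P.par i) (X i (r + 1)) (Y i s)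
        - sbr (P.par i) (P.par i) (X i r) (Y i (s + 1))) := by
  rw [← S.adL_tilde, ← hrs, ← hp i r s hrs.le, adL_sbr, S.pos.shift j i, S.neg.shift j i,
    sbr_smul_left, sbr_smul_right]
  module

lemma smul_cancel {a : ℤ} (ha : a = 1 ∨ a = -1) {x y : A}
    (h : ((a : ℤ) : R) • x = ((a : ℤ) : R) • y) : x = y := by
  rcases ha with rfl | rfl <;> simpa using h

/-- The difference of brackets one level up does not depend on the position. -/
lemma diff_eq_defect (S : MinSys P X Y H) (hN : 5 ≤ m + n) {p : ℕ} (hp : Level P X Y H p)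
    (i : Fin (m + n)) {r s : ℕ} (hrs : r + s = p) :
    sbr (P.par i) (P.par i) (X i (r + 1)) (Y i s) - sbr (P.par i) (P.par i) (X i r) (Y i (s + 1))
      = defect P X Y p i :=
  smul_cancel (P.a_succ' hN i)
    ((S.adL_one hp i (i + 1) hrs).symm.trans (S.adL_one hp i (i + 1) (add_zero p)))

lemma telescope (S : MinSys P X Y H) (hN : 5 ≤ m + n) {p : ℕ} (hp : Level P X Y H p)
    (i : Fin (m + n)) : ∀ k r s, k + r + s = p + 1 →
    sbr (P.par i) (P.par i) (X i (r + k)) (Y i s) - sbr (P.par i) (P.par i) (X i r) (Y i (s + k))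
      = ((k : ℕ) : R) • defect P X Y p i := by
  intro k
  induction k with
  | zero => intro r s _; simp
  | succ k ih =>
    intro r s h
    have e1 := ih r (s + 1) (by omega)
    have e2 := S.diff_eq_defect hN hp i (r := r + k) (s := s) (by omega)
    rw [show s + 1 + k = s + (k + 1) by omega] at e1
    rw [Nat.cast_add, add_smul, ← e1, Nat.cast_one, one_smul, ← e2,
      show r + (k + 1) = r + k + 1 by omega]
    abel

/-- The commutator `[h_{i,p}, h_{j,1}]`, computed through either of its arguments, relates the
defects of two adjacent nodes. -/
lemma defect_eq (S : MinSys P X Y H) (hN : 5 ≤ m + n) {p : ℕ} (hp1 : 1 ≤ p)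
    (hp : Level P X Y H p) {i j : Fin (m + n)} (hij : i ≠ j)
    (ha : P.a i j = 1 ∨ P.a i j = -1) :
    defect P X Y p i = -((p : R) • defect P X Y p j) := by
  have hx := S.act_pos hN hij p
  have hy := S.act_neg hN hij hp
  have hC := cartan_commute hx hy (hp j) le_rfl
  have e1 := adL_sbr_tw hx hy (hp j) p le_rfl (fun k t _ hkt => hC k t hkt) 1 0 (by omega)
  rw [sbr_tw_top _ (hp j) p 1 0 (by omega), S.telescope hN hp j p 1 0 (by omega),
    hp j 1 0 (by omega)] at e1
  have e2 := S.adL_one hp i j (add_zero p)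
  rw [← P.a_comm i j] at e2
  apply smul_cancel ha
  rw [smul_neg, ← e1, defect, ← e2]
  simp only [adL_apply]
  abel

lemma level_succ (S : MinSys P X Y H) (hN : 5 ≤ m + n) {p : ℕ} (hp1 : 1 ≤ p)
    (hp : Level P X Y H p) : Level P X Y H (p + 1) := by
  have hD : ∀ i, defect P X Y p i = 0 := by
    intro i
    have hne : i ≠ i + 1 :=
      (SimpleRootSystem.ne_of_sub (SimpleRootSystem.one_ne hN) (by abel)).symm
    obtain rfl | hp2 : p = 1 ∨ 2 ≤ p := by omega
    · have e := S.adL_one hp i (i + 1) (add_zero 1)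
      rw [S.h11] at e
      exact (smul_cancel (P.a_succ' hN i) (e.symm.trans (smul_zero _).symm))
    · have e1 := S.defect_eq hN hp1 hp hne (P.a_succ hN i)
      have e2 := S.defect_eq hN hp1 hp hne.symm (P.a_succ' hN i)
      rw [e2, smul_neg, neg_neg, smul_smul] at e1
      -- `D = p² D` with `p ≥ 2`, and positive integers are invertible in `ℂ[ℏ]`
      have e3 : ((p * p - 1 : ℕ) : R) • defect P X Y p i = 0 := by
        rw [Nat.cast_sub (by nlinarith), sub_smul, Nat.cast_mul, ← e1, Nat.cast_one, one_smul,
          sub_self]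
      have : p * p - 1 ≠ 0 := by
        have : 2 * 2 ≤ p * p := Nat.mul_le_mul hp2 hp2
        omega
      exact (isUnit_natCast_R this).smul_eq_zero.1 e3
  intro i r s hrs
  rcases Nat.lt_or_ge (r + s) (p + 1) with h | h
  · exact hp i r s (by omega)
  have := S.telescope hN hp i s r 0 (by omega)
  rw [hD, smul_zero, sub_eq_zero, zero_add] at this
  rw [← this, S.hH]

theorem level (S : MinSys P X Y H) (hN : 5 ≤ m + n) (p : ℕ) : Level P X Y H (p + 1) := by
  induction p with
  | zero =>
    intro i r s h
    obtain rfl | rfl : s = 0 ∨ s = 1 := by omega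
    · exact (S.hH i r).symm
    · obtain rfl : r = 0 := by omega
      simpa using S.h01 i
  | succ p ih => exact S.level_succ hN (by omega) ih

theorem pm_self (S : MinSys P X Y H) (hN : 5 ≤ m + n) (i : Fin (m + n)) (r s : ℕ) :
    sbr (P.par i) (P.par i) (X i r) (Y i s) = H i (r + s) :=
  S.level hN (r + s) i r s (by omega)

theorem shiftsTwo_pos (S : MinSys P X Y H) (hN : 5 ≤ m + n) :
    ShiftsTwo P 1 X (fun k => ht2 (H k)) := by
  intro k i hki s
  simpa using adL_ht2 (S.act_pos hN hki 2) le_rfl s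

theorem shiftsTwo_neg (S : MinSys P X Y H) (hN : 5 ≤ m + n) :
    ShiftsTwo P (-1) Y (fun k => ht2 (H k)) := by
  intro k i hki s
  simpa using adL_ht2 (S.act_neg hN hki (S.level hN 1)) le_rfl s

theorem actX (S : MinSys P X Y H) (hN : 5 ≤ m + n) (i j : Fin (m + n)) (L : ℕ) :
    Act L ((P.a i j : ℤ) : R) (H i) (X j) := by
  by_cases hij : i = j
  swap
  · exact S.act_pos hN hij L
  subst hij
  refine ⟨S.wp i i, fun r s _ => ?_⟩
  have hB := S.pm_self hN i
  cases hi : P.par i with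
  | false =>
    rw [hi] at hB
    refine act_self_even (u := Y i) (e := -1) isUnit_one.neg (fun t r => ?_) (fun r s => ?_) r s
    · rw [← hB, sbr_false, adL_apply, adL_apply, neg_smul, one_smul, neg_sub]
    · simpa [hi] using S.pos.mix_all (S.shiftsTwo_pos hN) hN i i r s
  | true =>
    rw [hi] at hB
    have hz := S.pos.odd_all (S.shiftsTwo_pos hN) hN hi
    have h0 := act_self_odd (h := H i) (u := Y i) (z := X i) (fun t r => by
      rw [← hB]; simp only [sbr, sg, Bool.and_self, if_true]; module) hz
    rw [h0, h0, P.a_self_odd hN hi]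
    simp

theorem actY (S : MinSys P X Y H) (hN : 5 ≤ m + n) (i j : Fin (m + n)) (L : ℕ) :
    Act L (-((P.a i j : ℤ) : R)) (H i) (Y j) := by
  by_cases hij : i = j
  swap
  · have := S.act_neg hN hij (S.level hN L)
    exact ⟨this.zero, fun r s hr => this.succ r s (by omega)⟩
  subst hij
  refine ⟨S.wm i i, fun r s _ => ?_⟩
  have hB := S.pm_self hN i
  cases hi : P.par i with
  | false =>
    rw [hi] at hB
    refine act_self_even (u := X i) (e := 1) isUnit_one (fun t r => ?_) (fun r s => ?_) r s
    · rw [add_comm r t, ← hB, sbr_false, one_smul]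
    · simpa [hi] using S.neg.mix_all (S.shiftsTwo_neg hN) hN i i r s
  | true =>
    rw [hi] at hB
    have hz := S.neg.odd_all (S.shiftsTwo_neg hN) hN hi
    have h0 := act_self_odd (h := H i) (u := X i) (z := Y i) (fun t r => by
      rw [add_comm r t]; exact hB t r) hz
    rw [h0, h0, P.a_self_odd hN hi]
    simp

theorem hh (S : MinSys P X Y H) (hN : 5 ≤ m + n) (i j : Fin (m + n)) (r s : ℕ) :
    H i r * H j s = H j s * H i r :=
  cartan_commute (M := r + s) (S.actX hN i j (r + s)) (S.actY hN i j (r + s))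
    (fun r s _ => S.pm_self hN j r s) le_rfl r s le_rfl

end MinSys

end TwoSided

end ASY
namespace ASY

section Hom

variable {A B : Type*} [Ring A] [Algebra R A] [Ring B] [Algebra R B]

/-! ### Homomorphisms and super-brackets -/

lemma map_sbr (f : A →ₐ[R] B) (p q : Bool) (x y : A) :
    f (sbr p q x y) = sbr p q (f x) (f y) := by
  simp [sbr]

lemma map_adL (f : A →ₐ[R] B) (t x : A) : f (adL t x) = adL (f t) (f x) := by
  simp [adL_apply]

lemma adSeq_replicate (p q : Bool) (x y : A) (k : ℕ) :
    adSeq p q (List.replicate k x) y = adN p q x k y := by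
  induction k with
  | zero => rfl
  | succ k ih => simp only [List.replicate_succ, adSeq, adN, ih, List.length_replicate]

lemma adL_adL_comm {t u : A} (h : t * u = u * t) (x : A) :
    adL t (adL u x) = adL u (adL t x) := by
  simp only [adL_apply, mul_sub, sub_mul, ← mul_assoc, h]
  simp only [mul_assoc, h]
  abel

/-- If `u` generates the current `x` and `t` commutes with `u`, then the action of `t` on the
whole current is determined by its action on `x 0`. -/
lemma adL_of_zero {t u : A} (h : t * u = u * t) {x : ℕ → A} {c a : R} {k : ℕ}
    (hx : ∀ s, x (s + 1) = c • adL u (x s)) (h0 : adL t (x 0) = a • x k) (s : ℕ) :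
    adL t (x s) = a • x (s + k) := by
  induction s with
  | zero => rw [h0, zero_add]
  | succ s ih =>
    rw [hx s, map_smul, adL_adL_comm h, ih, map_smul, smul_comm, ← hx, add_right_comm]

lemma adL_tilde_of_act {L : ℕ} {a : R} {h x : ℕ → A} (H : Act L a h x) (hL : 1 ≤ L) (s : ℕ) :
    adL (h 1 - (half * hbar) • (h 0 * h 0)) (x s) = a • x (s + 1) := by
  have e1 := sub_eq_iff_eq_add.1 (H.succ 0 s (by omega))
  have e2 : adL (h 0 * h 0) (x s) = h 0 * adL (h 0) (x s) + adL (h 0) (x s) * h 0 := by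
    simp only [adL_apply]; noncomm_ring
  have e3 : adL (h 1 - (half * hbar) • (h 0 * h 0)) (x s)
      = adL (h 1) (x s) - (half * hbar) • adL (h 0 * h 0) (x s) := by
    simp only [adL_apply, sub_mul, mul_sub, smul_mul_assoc, mul_smul_comm, smul_sub]
    abel
  rw [zero_add] at e1
  rw [e3, e1, e2, H.zero, H.zero, mul_smul_comm, smul_mul_assoc]
  module

end Hom

section Free

variable {G A : Type*} [Ring A] [Algebra R A] (f : FreeAlgebra R G →ₐ[R] A)

/-! The following instances of the general compatibility of homomorphisms with brackets are
stated for the ring structure that instance search finds on a free algebra. -/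

lemma free_smul (c : R) (x : FreeAlgebra R G) : f (c • x) = c • f x := map_smul f c x

lemma free_sbr (p q : Bool) (x y : FreeAlgebra R G) :
    f (sbr p q x y) = sbr p q (f x) (f y) := by
  refine (map_sub f _ _).trans ?_
  refine congrArg₂ _ (map_mul f _ _) ((map_smul f _ _).trans ?_)
  exact congrArg _ (map_mul f _ _)

lemma free_sac (p q : Bool) (x y : FreeAlgebra R G) :
    f (sac p q x y) = sac p q (f x) (f y) := by
  refine (map_add f _ _).trans ?_
  refine congrArg₂ _ (map_mul f _ _) ((map_smul f _ _).trans ?_)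
  exact congrArg _ (map_mul f _ _)

lemma free_adN (p q : Bool) (x y : FreeAlgebra R G) (k : ℕ) :
    f (adN p q x k y) = adN p q (f x) k (f y) := by
  induction k with
  | zero => rfl
  | succ k ih => simp only [adN, free_sbr, ih]

lemma free_adSeq (p q : Bool) (l : List (FreeAlgebra R G)) (y : FreeAlgebra R G) :
    f (adSeq p q l y) = adSeq p q (l.map f) (f y) := by
  induction l with
  | nil => rfl
  | cons x l ih => simp only [adSeq, List.map_cons, free_sbr, ih, List.length_map]

lemma free_sub (x y : FreeAlgebra R G) : f (x - y) = f x - f y := map_sub f x y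

lemma free_sum {ι : Type*} (s : Finset ι) (x : ι → FreeAlgebra R G) :
    f (∑ i ∈ s, x i) = ∑ i ∈ s, f (x i) := map_sum f x s

lemma free_zero : f 0 = 0 := map_zero f

lemma free_mul (x y : FreeAlgebra R G) : f (x * y) = f x * f y := map_mul f x y

lemma free_tilde {m n : ℕ} (f : MFree m n →ₐ[R] A) (i : Fin (m + n)) :
    f (MHt i) = f (MH i 1) - (half * hbar) • (f (MH i 0) * f (MH i 0)) := by
  rw [MHt, free_sub, free_smul, free_mul]

end Free

section Min

variable {m n : ℕ} [NeZero (m + n)]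

/-! ### Currents in a representation of the minimalistic relations -/

lemma acoef_mul (P : SimpleRootSystem m n) (hN : 5 ≤ m + n) (i : Fin (m + n)) :
    acoef P i * ((P.a (i + 1) i : ℤ) : R) = 1 := by
  rcases P.a_succ' hN i with h | h <;> simp [acoef, h]

variable {A B : Type*} [Ring A] [Algebra R A] [Ring B] [Algebra R B]

/-- A homomorphism `f` from the free algebra that respects the minimalistic relations, with
currents `X`, `Y`, `H` obtained from the images of the generators by the recursion that
defines `xpn`, `xmn` and `hcn`. -/
structure MinRep (P : SimpleRootSystem m n) (f : MFree m n →ₐ[R] A)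
    (X Y H : Fin (m + n) → ℕ → A) : Prop where
  rel : ∀ {x y}, MRel P x y → f x = f y
  x0 : ∀ i, X i 0 = f (MXp i 0)
  x1 : ∀ i, X i 1 = f (MXp i 1)
  x2 : ∀ i r, X i (r + 2) = acoef P i • sbr false (P.par i) (f (MHt (i + 1))) (X i (r + 1))
  y0 : ∀ i, Y i 0 = f (MXm i 0)
  y1 : ∀ i, Y i 1 = f (MXm i 1)
  y2 : ∀ i r, Y i (r + 2) = (-acoef P i) • sbr false (P.par i) (f (MHt (i + 1))) (Y i (r + 1))
  h0 : ∀ i, H i 0 = f (MH i 0)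
  h1 : ∀ i, H i 1 = f (MH i 1)
  h2 : ∀ i r, H i (r + 2) = sbr (P.par i) (P.par i) (X i (r + 2)) (Y i 0)

namespace MinRep

variable {P : SimpleRootSystem m n} {f : MFree m n →ₐ[R] A} {X Y H : Fin (m + n) → ℕ → A}

lemma h_comm (S : MinRep P f X Y H) (i j : Fin (m + n)) (r s : Fin 2) :
    f (MH i r) * f (MH j s) = f (MH j s) * f (MH i r) := by
  have := S.rel (MRel.hh i j r s)
  rw [free_sbr, free_zero, sbr_false, adL_apply, sub_eq_zero] at this
  exact this

lemma h_tilde_comm (S : MinRep P f X Y H) (i j : Fin (m + n)) (r : Fin 2) :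
    f (MH i r) * f (MHt j) = f (MHt j) * f (MH i r) := by
  have h := S.h_comm i j r
  have h2 : Commute (f (MH i r)) (f (MH j 0) * f (MH j 0)) := Commute.mul_right (h 0) (h 0)
  rw [free_tilde, mul_sub, sub_mul, mul_smul_comm, smul_mul_assoc, h 1, h2.eq]

lemma tilde_comm (S : MinRep P f X Y H) (i j : Fin (m + n)) :
    f (MHt i) * f (MHt j) = f (MHt j) * f (MHt i) := by
  have h := S.h_tilde_comm
  have h2 : Commute (f (MH i 0) * f (MH i 0)) (f (MHt j)) := Commute.mul_left (h i j 0) (h i j 0)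
  rw [free_tilde f i, mul_sub, sub_mul, mul_smul_comm, smul_mul_assoc, h i j 1, h2.eq]

lemma tilde_x (S : MinRep P f X Y H) (i j : Fin (m + n)) :
    adL (f (MHt i)) (X j 0) = ((P.a i j : ℤ) : R) • X j 1 := by
  have := S.rel (MRel.htxp i j)
  rwa [free_sbr, free_smul, sbr_false, ← S.x0, ← S.x1] at this

lemma tilde_y (S : MinRep P f X Y H) (i j : Fin (m + n)) :
    adL (f (MHt i)) (Y j 0) = (-((P.a i j : ℤ) : R)) • Y j 1 := by
  have := S.rel (MRel.htxm i j)
  rwa [free_sbr, free_smul, sbr_false, ← S.y0, ← S.y1] at this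

lemma x_succ (S : MinRep P f X Y H) (hN : 5 ≤ m + n) (i : Fin (m + n)) (s : ℕ) :
    X i (s + 1) = acoef P i • adL (f (MHt (i + 1))) (X i s) := by
  cases s with
  | zero => rw [S.tilde_x, smul_smul, acoef_mul P hN, one_smul]
  | succ s => rw [S.x2, sbr_false]

lemma y_succ (S : MinRep P f X Y H) (hN : 5 ≤ m + n) (i : Fin (m + n)) (s : ℕ) :
    Y i (s + 1) = (-acoef P i) • adL (f (MHt (i + 1))) (Y i s) := by
  cases s with
  | zero => rw [S.tilde_y, smul_smul, neg_mul_neg, acoef_mul P hN, one_smul]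
  | succ s => rw [S.y2, sbr_false]

theorem minSys (S : MinRep P f X Y H) (hN : 5 ≤ m + n) : MinSys P X Y H where
  pos :=
    { sign := Or.inl rfl
      shift := fun i j s => by
        rw [S.h0, S.h1, ← free_tilde, one_mul]
        exact adL_of_zero (S.tilde_comm i (j + 1)) (S.x_succ hN j) (S.tilde_x i j) s
      mix := fun i j => by
        have := S.rel (MRel.mixp i j)
        rw [free_sub, free_sbr, free_sbr, free_smul, free_sac] at this
        simpa only [one_mul, S.x0, S.x1] using this
      serre := fun i j hij => by
        have := S.rel (MRel.serrep i j hij)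
        rw [free_adN, free_zero] at this
        simpa only [S.x0] using this
      odd := fun i hi => by
        have := S.rel (MRel.oddp i hi)
        rw [free_sbr, free_zero] at this
        simpa only [S.x0] using this
      oddS := fun i hi => by
        have := S.rel (MRel.oddSp i hi)
        rw [free_sbr, free_sbr, free_sbr, free_zero] at this
        simpa only [S.x0] using this }
  neg :=
    { sign := Or.inr rfl
      shift := fun i j s => by
        rw [S.h0, S.h1, ← free_tilde, neg_one_mul]
        exact adL_of_zero (S.tilde_comm i (j + 1)) (S.y_succ hN j) (S.tilde_y i j) s
      mix := fun i j => by
        have := S.rel (MRel.mixm i j)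
        rw [free_sub, free_sbr, free_sbr, free_smul, free_sac] at this
        simpa only [neg_one_mul, mul_neg, S.y0, S.y1] using this
      serre := fun i j hij => by
        have := S.rel (MRel.serrem i j hij)
        rw [free_adN, free_zero] at this
        simpa only [S.y0] using this
      odd := fun i hi => by
        have := S.rel (MRel.oddm i hi)
        rw [free_sbr, free_zero] at this
        simpa only [S.y0] using this
      oddS := fun i hi => by
        have := S.rel (MRel.oddSm i hi)
        rw [free_sbr, free_sbr, free_sbr, free_zero] at this
        simpa only [S.y0] using this }
  wp := fun i j s => by
    have := S.rel (MRel.hxp i j 0)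
    rw [free_sbr, free_smul, sbr_false, ← S.h0, ← S.x0] at this
    rw [S.h0] at this ⊢
    exact adL_of_zero (k := 0) (S.h_tilde_comm i (j + 1) 0) (S.x_succ hN j) this s
  wm := fun i j s => by
    have := S.rel (MRel.hxm i j 0)
    rw [free_sbr, free_smul, sbr_false, ← S.h0, ← S.y0] at this
    rw [S.h0] at this ⊢
    exact adL_of_zero (k := 0) (S.h_tilde_comm i (j + 1) 0) (S.y_succ hN j) this s
  hH := fun i r => by
    match r with
    | 0 =>
      have := S.rel (MRel.pm00 i i)
      rw [free_sbr, if_pos rfl] at this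
      rw [S.x0, S.y0, S.h0, this]
    | 1 =>
      have := S.rel (MRel.pm10 i i)
      rw [free_sbr, if_pos rfl] at this
      rw [S.x1, S.y0, S.h1, this]
    | r + 2 => exact S.h2 i r
  h01 := fun i => by
    have := S.rel (MRel.pm01 i i)
    rw [free_sbr, if_pos rfl] at this
    rw [S.x0, S.y1, S.h1, this]
  h11 := fun i j => by
    rw [adL_apply, sub_eq_zero]
    rw [S.h1, S.h1]
    exact S.h_comm i j 1 1
  pm0 := fun i j hij => by
    have := S.rel (MRel.pm00 i j)
    rwa [free_sbr, if_neg hij, free_zero, ← S.x0, ← S.y0] at this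

end MinRep

end Min

section Drinfeld

variable {m n : ℕ} [NeZero (m + n)] {P : SimpleRootSystem m n}
variable {A : Type*} [Ring A] [Algebra R A]

/-! ### The Drinfeld relations follow from the minimalistic ones -/

theorem MinSys.rel {g : DFree m n →ₐ[R] A}
    (S : MinSys P (fun i r => g (DXp i r)) (fun i r => g (DXm i r)) (fun i r => g (DH i r)))
    (hN : 5 ≤ m + n) {x y : DFree m n} (h : DRel P x y) : g x = g y := by
  have up := S.shiftsTwo_pos hN
  have um := S.shiftsTwo_neg hN
  induction h with
  | hh i j r s =>
    rw [free_sbr, free_zero, sbr_false, adL_apply, sub_eq_zero]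
    exact S.hh hN i j r s
  | hxp i j s =>
    rw [free_sbr, free_smul, sbr_false]
    exact S.wp i j s
  | hxm i j s =>
    rw [free_sbr, free_smul, sbr_false]
    exact S.wm i j s
  | pm i j r s =>
    rw [free_sbr]
    split_ifs with hij
    · subst hij; rw [S.pm_self hN]
    · rw [S.pm_ne hN hij, free_zero]
  | hmixp i j r s =>
    rw [free_sub, free_sbr, free_sbr, free_smul, free_sac, sbr_false, sbr_false, sac_false]
    exact (S.actX hN i j (r + 1)).succ r s (by omega)
  | hmixm i j r s =>
    rw [free_sub, free_sbr, free_sbr, free_smul, free_sac, sbr_false, sbr_false, sac_false]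
    rw [← mul_neg]
    exact (S.actY hN i j (r + 1)).succ r s (by omega)
  | xmixp i j r s =>
    simp only [free_sub, free_sbr, free_smul, free_sac]
    rw [S.pos.mix_all up hN i j r s, one_mul]
  | xmixm i j r s =>
    simp only [free_sub, free_sbr, free_smul, free_sac]
    rw [S.neg.mix_all um hN i j r s, neg_one_mul, mul_neg]
  | serrep i j hij rr s =>
    simp only [free_sum, free_adSeq, List.map_ofFn, Function.comp_def, free_zero]
    exact S.pos.serre_all up hN hij rr s
  | serrem i j hij rr s =>
    simp only [free_sum, free_adSeq, List.map_ofFn, Function.comp_def, free_zero]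
    exact S.neg.serre_all um hN hij rr s
  | oddp t ht r s =>
    simp only [free_sbr, free_zero]
    exact S.pos.odd_all up hN ht r s
  | oddm t ht r s =>
    simp only [free_sbr, free_zero]
    exact S.neg.odd_all um hN ht r s
  | oddSp t ht r s =>
    simp only [free_sbr, free_zero]
    exact S.pos.oddS_all hN ht r s
  | oddSm t ht r s =>
    simp only [free_sbr, free_zero]
    exact S.neg.oddS_all hN ht r s

/-! ### The minimalistic relations among the Drinfeld ones -/

/-- For equal indices the Serre sum is `k!` times an iterated adjoint action. -/
lemma adN_eq_zero {p q : Bool} {x y : A} {k : ℕ}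
    (h : ∑ _σ : Equiv.Perm (Fin k), adSeq p q (List.ofFn fun _ : Fin k => x) y = 0) :
    adN p q x k y = 0 := by
  rw [Finset.sum_const, Finset.card_univ, List.ofFn_const, adSeq_replicate,
    ← Nat.cast_smul_eq_nsmul R] at h
  exact (isUnit_natCast_R Fintype.card_ne_zero).smul_eq_zero.1 h

variable {g : DFree m n →ₐ[R] A}

lemma drel_actX (hg : ∀ {x y}, DRel P x y → g x = g y)
    (i j : Fin (m + n)) (L : ℕ) :
    Act L ((P.a i j : ℤ) : R) (fun r => g (DH i r)) (fun r => g (DXp j r)) := by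
  refine ⟨fun s => ?_, fun r s _ => ?_⟩
  · have := hg (DRel.hxp i j s)
    rwa [free_sbr, free_smul, sbr_false] at this
  · have := hg (DRel.hmixp i j r s)
    rwa [free_sub, free_sbr, free_sbr, free_smul, free_sac, sbr_false, sbr_false, sac_false] at this

lemma drel_actY (hg : ∀ {x y}, DRel P x y → g x = g y)
    (i j : Fin (m + n)) (L : ℕ) :
    Act L (-((P.a i j : ℤ) : R)) (fun r => g (DH i r)) (fun r => g (DXm j r)) := by
  refine ⟨fun s => ?_, fun r s _ => ?_⟩
  · have := hg (DRel.hxm i j s)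
    rwa [free_sbr, free_smul, sbr_false] at this
  · have := hg (DRel.hmixm i j r s)
    rwa [free_sub, free_sbr, free_sbr, free_smul, free_sac, sbr_false, sbr_false, sac_false,
      ← mul_neg] at this

lemma drel_pm (hg : ∀ {x y}, DRel P x y → g x = g y) (i j : Fin (m + n)) (r s : ℕ) :
    sbr (P.par i) (P.par j) (g (DXp i r)) (g (DXm j s))
      = if i = j then g (DH i (r + s)) else 0 := by
  have := hg (DRel.pm i j r s)
  rw [free_sbr] at this
  refine this.trans ?_
  split_ifs
  · rfl
  · exact free_zero g

/-- A homomorphism from the free algebra respects the minimalistic relations if it sends the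
generators to the currents of the same name in a representation of the Drinfeld relations. -/
theorem drel_mrel (hg : ∀ {x y}, DRel P x y → g x = g y) {f : MFree m n →ₐ[R] A}
    (hxp : ∀ i r, f (MXp i r) = g (DXp i r.val)) (hxm : ∀ i r, f (MXm i r) = g (DXm i r.val))
    (hh : ∀ i r, f (MH i r) = g (DH i r.val)) {x y : MFree m n} (h : MRel P x y) : f x = f y := by
  induction h with
  | hh i j r s =>
    have := hg (DRel.hh i j r s)
    rw [free_sbr, free_zero] at this ⊢
    rw [hh, hh, this]
  | pm00 i j =>
    rw [free_sbr, hxp, hxm]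
    refine (drel_pm hg i j 0 0).trans ?_
    split_ifs
    · exact (hh i 0).symm
    · exact (free_zero f).symm
  | pm10 i j =>
    rw [free_sbr, hxp, hxm]
    refine (drel_pm hg i j 1 0).trans ?_
    split_ifs
    · exact (hh i 1).symm
    · exact (free_zero f).symm
  | pm01 i j =>
    rw [free_sbr, hxp, hxm]
    refine (drel_pm hg i j 0 1).trans ?_
    split_ifs
    · exact (hh i 1).symm
    · exact (free_zero f).symm
  | hxp i j r =>
    rw [free_sbr, free_smul, hxp, hh, sbr_false]
    exact (drel_actX hg i j 0).zero r
  | hxm i j r =>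
    rw [free_sbr, free_smul, hxm, hh, sbr_false]
    exact (drel_actY hg i j 0).zero r
  | mixp i j =>
    have := hg (DRel.xmixp i j 0 0)
    rw [free_sub, free_sbr, free_sbr, free_smul, free_sac] at this ⊢
    simp only [hxp]
    exact this
  | mixm i j =>
    have := hg (DRel.xmixm i j 0 0)
    rw [free_sub, free_sbr, free_sbr, free_smul, free_sac] at this ⊢
    simp only [hxm]
    exact this
  | htxp i j =>
    rw [free_sbr, free_smul, free_tilde, hxp, hxp, hh, hh, sbr_false]
    exact adL_tilde_of_act (drel_actX hg i j 1) le_rfl 0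
  | htxm i j =>
    rw [free_sbr, free_smul, free_tilde, hxm, hxm, hh, hh, sbr_false]
    exact adL_tilde_of_act (drel_actY hg i j 1) le_rfl 0
  | serrep i j hij =>
    have := hg (DRel.serrep i j hij (fun _ => 0) 0)
    simp only [free_sum, free_adSeq, List.map_ofFn, Function.comp_def, free_zero] at this
    rw [free_adN, free_zero, hxp, hxp]
    exact adN_eq_zero this
  | serrem i j hij =>
    have := hg (DRel.serrem i j hij (fun _ => 0) 0)
    simp only [free_sum, free_adSeq, List.map_ofFn, Function.comp_def, free_zero] at this
    rw [free_adN, free_zero, hxm, hxm]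
    exact adN_eq_zero this
  | oddp t ht =>
    have := hg (DRel.oddp t ht 0 0)
    rw [free_sbr, free_zero] at this ⊢
    simp only [hxp]
    exact this
  | oddm t ht =>
    have := hg (DRel.oddm t ht 0 0)
    rw [free_sbr, free_zero] at this ⊢
    simp only [hxm]
    exact this
  | oddSp t ht =>
    have := hg (DRel.oddSp t ht 0 0)
    simp only [free_sbr, free_zero, hxp] at this ⊢
    exact this
  | oddSm t ht =>
    have := hg (DRel.oddSm t ht 0 0)
    simp only [free_sbr, free_zero, hxm] at this ⊢
    exact this

end Drinfeld

section Iso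

variable {m n : ℕ} [NeZero (m + n)] (P : SimpleRootSystem m n)

/-! ### The homomorphism from the Drinfeld Yangian to the minimalistic one -/

lemma minRep : MinRep P (mkY P) (xpn P) (xmn P) (hcn P) where
  rel h := RingQuot.mkAlgHom_rel R h
  x0 _ := rfl
  x1 _ := rfl
  x2 _ _ := rfl
  y0 _ := rfl
  y1 _ := rfl
  y2 _ _ := rfl
  h0 _ := rfl
  h1 _ := rfl
  h2 _ _ := rfl

/-- The images in `Y_ℏ` of the Drinfeld generators. -/
def genDY : DGen (m + n) → Ymin P
  | .xp i r => xpn P i r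
  | .xm i r => xmn P i r
  | .h i r => hcn P i r

/-- The extension of `genDY` to the free algebra. -/
def liftDY : DFree m n →ₐ[R] Ymin P := FreeAlgebra.lift R (genDY P)

lemma liftDY_xp (i : Fin (m + n)) (r : ℕ) : liftDY P (DXp i r) = xpn P i r :=
  FreeAlgebra.lift_ι_apply _ _

lemma liftDY_xm (i : Fin (m + n)) (r : ℕ) : liftDY P (DXm i r) = xmn P i r :=
  FreeAlgebra.lift_ι_apply _ _

lemma liftDY_h (i : Fin (m + n)) (r : ℕ) : liftDY P (DH i r) = hcn P i r :=
  FreeAlgebra.lift_ι_apply _ _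

theorem liftDY_rel (hN : 5 ≤ m + n) {x y : DFree m n} (h : DRel P x y) :
    liftDY P x = liftDY P y := by
  refine MinSys.rel (A := Ymin P) (g := liftDY P) (P := P) ?_ hN h
  simp only [liftDY_xp, liftDY_xm, liftDY_h]
  exact (minRep P).minSys hN

/-- The homomorphism `Y^D_ℏ → Y_ℏ`. -/
def homDY (hN : 5 ≤ m + n) : YD P →ₐ[R] Ymin P :=
  RingQuot.liftAlgHom R ⟨liftDY P, fun _ _ h => liftDY_rel P hN h⟩

lemma homDY_mk (hN : 5 ≤ m + n) (x : DFree m n) : homDY P hN (mkD P x) = liftDY P x :=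
  RingQuot.liftAlgHom_mkAlgHom_apply _ _ _ _

/-! ### The homomorphism from the minimalistic Yangian to the Drinfeld one -/

/-- The images in `Y^D_ℏ` of the minimalistic generators. -/
def genYD : MGen (m + n) → YD P
  | .xp i r => xdp P i r.val
  | .xm i r => xdm P i r.val
  | .h i r => hd P i r.val

/-- The extension of `genYD` to the free algebra. -/
def liftYD : MFree m n →ₐ[R] YD P := FreeAlgebra.lift R (genYD P)

lemma liftYD_xp (i : Fin (m + n)) (r : Fin 2) : liftYD P (MXp i r) = xdp P i r.val :=
  FreeAlgebra.lift_ι_apply _ _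

lemma liftYD_xm (i : Fin (m + n)) (r : Fin 2) : liftYD P (MXm i r) = xdm P i r.val :=
  FreeAlgebra.lift_ι_apply _ _

lemma liftYD_h (i : Fin (m + n)) (r : Fin 2) : liftYD P (MH i r) = hd P i r.val :=
  FreeAlgebra.lift_ι_apply _ _

lemma mkD_rel {x y : DFree m n} (h : DRel P x y) : mkD P x = mkD P y :=
  RingQuot.mkAlgHom_rel R h

theorem liftYD_rel {x y : MFree m n} (h : MRel P x y) : liftYD P x = liftYD P y :=
  drel_mrel (A := YD P) (g := mkD P) (mkD_rel P) (f := liftYD P)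
    (liftYD_xp P) (liftYD_xm P) (liftYD_h P) h

/-- The homomorphism `Y_ℏ → Y^D_ℏ`. -/
def homYD : Ymin P →ₐ[R] YD P :=
  RingQuot.liftAlgHom R ⟨liftYD P, fun _ _ h => liftYD_rel P h⟩

lemma homYD_mk (x : MFree m n) : homYD P (mkY P x) = liftYD P x :=
  RingQuot.liftAlgHom_mkAlgHom_apply _ _ _ _

/-! ### The two homomorphisms are mutually inverse -/

variable {P}

/-- A homomorphism that sends the generators with `r = 0` and the elements `h̃_{i,1}` of a
representation of the minimalistic relations to the Drinfeld currents of the same name does so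
for all the recursively defined currents. -/
lemma MinRep.map_currents {A B : Type*} [Ring A] [Algebra R A] [Ring B] [Algebra R B]
    {f : MFree m n →ₐ[R] A} {X Y H : Fin (m + n) → ℕ → A} (S : MinRep P f X Y H)
    (hN : 5 ≤ m + n) {g : DFree m n →ₐ[R] B} (hg : ∀ {x y}, DRel P x y → g x = g y)
    (φ : A →ₐ[R] B) (hx : ∀ i, φ (X i 0) = g (DXp i 0)) (hy : ∀ i, φ (Y i 0) = g (DXm i 0))
    (ht : ∀ i, φ (f (MHt i)) = g (DH i 1) - (half * hbar) • (g (DH i 0) * g (DH i 0)))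
    (i : Fin (m + n)) (r : ℕ) :
    φ (X i r) = g (DXp i r) ∧ φ (Y i r) = g (DXm i r) ∧ φ (H i r) = g (DH i r) := by
  have h1 : φ (X i r) = g (DXp i r) := by
    induction r with
    | zero => exact hx i
    | succ r ih =>
      rw [S.x_succ hN, map_smul, map_adL, ih, ht]
      have := adL_tilde_of_act (drel_actX hg (i + 1) i 1) le_rfl r
      rw [this, smul_smul, acoef_mul P hN, one_smul]
  refine ⟨h1, ?_, ?_⟩
  · clear h1
    induction r with
    | zero => exact hy i
    | succ r ih =>
      rw [S.y_succ hN, map_smul, map_adL, ih, ht]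
      have := adL_tilde_of_act (drel_actY hg (i + 1) i 1) le_rfl r
      rw [this, smul_smul, neg_mul_neg, acoef_mul P hN, one_smul]
  · rw [(S.minSys hN).hH, map_sbr, h1, hy, drel_pm hg, if_pos rfl, add_zero]

variable (P)

lemma homYD_currents (hN : 5 ≤ m + n) (i : Fin (m + n)) (r : ℕ) :
    homYD P (xpn P i r) = xdp P i r ∧ homYD P (xmn P i r) = xdm P i r ∧
      homYD P (hcn P i r) = hd P i r := by
  refine MinRep.map_currents (A := Ymin P) (B := YD P) (minRep P) hN (g := mkD P) (mkD_rel P)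
    (homYD P) (fun i => ?_) (fun i => ?_) (fun i => ?_) i r
  · exact (homYD_mk P _).trans (liftYD_xp P i 0)
  · exact (homYD_mk P _).trans (liftYD_xm P i 0)
  · refine (homYD_mk P _).trans ((free_tilde (A := YD P) (liftYD P) i).trans ?_)
    rw [liftYD_h, liftYD_h]
    rfl

theorem homYD_comp_homDY (hN : 5 ≤ m + n) :
    (homYD P).comp (homDY P hN) = AlgHom.id R (YD P) := by
  refine RingQuot.ringQuot_ext' R _ _ (FreeAlgebra.hom_ext (funext fun g => ?_))
  change homYD P (homDY P hN (mkD P (FreeAlgebra.ι R g))) = mkD P (FreeAlgebra.ι R g)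
  rw [homDY_mk]
  cases g with
  | xp i r => exact (congrArg _ (liftDY_xp P i r)).trans (homYD_currents P hN i r).1
  | xm i r => exact (congrArg _ (liftDY_xm P i r)).trans (homYD_currents P hN i r).2.1
  | h i r => exact (congrArg _ (liftDY_h P i r)).trans (homYD_currents P hN i r).2.2

theorem homDY_comp_homYD (hN : 5 ≤ m + n) :
    (homDY P hN).comp (homYD P) = AlgHom.id R (Ymin P) := by
  refine RingQuot.ringQuot_ext' R _ _ (FreeAlgebra.hom_ext (funext fun g => ?_))
  change homDY P hN (homYD P (mkY P (FreeAlgebra.ι R g))) = mkY P (FreeAlgebra.ι R g)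
  rw [homYD_mk]
  cases g with
  | xp i r =>
    refine (congrArg _ (liftYD_xp P i r)).trans ((homDY_mk P hN _).trans ?_)
    rw [liftDY_xp]
    fin_cases r <;> rfl
  | xm i r =>
    refine (congrArg _ (liftYD_xm P i r)).trans ((homDY_mk P hN _).trans ?_)
    rw [liftDY_xm]
    fin_cases r <;> rfl
  | h i r =>
    refine (congrArg _ (liftYD_h P i r)).trans ((homDY_mk P hN _).trans ?_)
    rw [liftDY_h]
    fin_cases r <;> rfl

end Iso

end ASY

namespace ASY

/-- For any simple root system `Π` of `ŝl(m|n)` with `m, n ≥ 2` and `m ≠ n`,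
the minimalistic affine super Yangian `Y_ℏ(ŝl(m|n,Π))` is isomorphic, as an associative
superalgebra, to the Drinfeld affine super Yangian `Y^D_ℏ(ŝl(m|n,Π))`, via an isomorphism
sending the generators `x^±_{α_i,r}`, `h_{α_i,r}` (`r ∈ {0,1}`) to the generators
of the same name. -/
theorem minimalistic_iso_drinfeld (m n : ℕ) [NeZero (m + n)] (hm : 2 ≤ m) (hn : 2 ≤ n)
    (hmn : m ≠ n) (P : SimpleRootSystem m n) :
    ∃ E : Ymin P ≃ₐ[R] YD P, MatchesGenerators P E := by
  -- `m ≠ n` with `m, n ≥ 2` gives at least five nodes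
  have hN : 5 ≤ m + n := by omega
  refine ⟨AlgEquiv.ofAlgHom (homYD P) (homDY P hN) (homYD_comp_homDY P hN)
    (homDY_comp_homYD P hN), fun i r => ⟨?_, ?_, ?_⟩⟩
  · exact (homYD_mk P _).trans (liftYD_xp P i r)
  · exact (homYD_mk P _).trans (liftYD_xm P i r)
  · exact (homYD_mk P _).trans (liftYD_h P i r)

end ASY
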